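/- arXiv:1110.1713 — 3 statements merged into one kernel-verified Lean document; each statement's English description precedes it below -/
import Mathlib

section
/- There exists a constant C > 0 such that for every f ∈ H¹ the Poisson maximal function M̃f belongs to L¹(ρ) and ‖M̃f‖₁ ≤ C‖f‖_{H¹}. -/
open MeasureTheory Real Filter Set
open scoped ENNReal

noncomputable section

/-- The group `G = ℝ² ⋊ ℝ⁺`, realized as triples `(x₁, x₂, a)` (only `a > 0` is relevant). -/
abbrev G : Type := ℝ × ℝ × ℝ

/-- Group product `(x₁,x₂,a)·(x₁',x₂',a') = (x₁+a x₁', x₂+a x₂', a a')`. -/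
def gMul (x y : G) : G := (x.1 + x.2.2 * y.1, x.2.1 + x.2.2 * y.2.1, x.2.2 * y.2.2)

/-- Group inverse `(x₁,x₂,a)⁻¹ = (−x₁/a, −x₂/a, 1/a)`. -/
def gInv (x : G) : G := (-x.1 / x.2.2, -x.2.1 / x.2.2, 1 / x.2.2)

/-- The identity `e = (0,0,1)`. -/
def gE : G := (0, 0, 1)

/-- The right Haar measure `dρ = a⁻¹ dx₁ dx₂ da` (supported where `a > 0`). -/
def ρG : Measure G :=
  (volume : Measure G).withDensity fun x => ENNReal.ofReal (if 0 < x.2.2 then x.2.2⁻¹ else 0)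

/-- The modular function `δ(x₁,x₂,a) = a⁻²`. -/
def deltaG (x : G) : ℝ := (x.2.2 ^ 2)⁻¹

/-- `|x| = √(x₁² + x₂²)`. -/
def normG (x : G) : ℝ := Real.sqrt (x.1 ^ 2 + x.2.1 ^ 2)

/-- `cosh r(x) = (a + a⁻¹ + a⁻¹|x|²)/2`. -/
def coshArg (x : G) : ℝ := (x.2.2 + x.2.2⁻¹ + x.2.2⁻¹ * (x.1 ^ 2 + x.2.1 ^ 2)) / 2

/-- `r(x) ≥ 0` is determined by `cosh r(x) = coshArg x`; explicitly `r = arcosh (coshArg x)`. -/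
def rG (x : G) : ℝ := Real.log (coshArg x + Real.sqrt (coshArg x ^ 2 - 1))

/-- The left-invariant distance `d(x,y) = r(x⁻¹y)`. -/
def dG (x y : G) : ℝ := rG (gMul (gInv x) y)

/-- The heat kernel
`p_t(x) = (8π^{3/2})⁻¹ δ(x)^{1/2} (r(x)/sinh r(x)) t^{−3/2} exp(−r(x)²/(4t))`,
with `r/sinh r := 1` at `x = e`. -/
def heatK (t : ℝ) (x : G) : ℝ :=
  (8 * Real.pi ^ ((3 : ℝ)/2))⁻¹ * Real.sqrt (deltaG x) *
    (if rG x = 0 then 1 else rG x / Real.sinh (rG x)) *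
    t ^ (-(3 : ℝ)/2) * Real.exp (-(rG x ^ 2) / (4 * t))

/-- Convolution `f ∗ p_t(x) = ∫ f(xy⁻¹) p_t(y) dρ(y)`. -/
def convHeat (f : G → ℝ) (t : ℝ) (x : G) : ℝ := ∫ y, f (gMul x (gInv y)) * heatK t y ∂ρG

/-- The heat maximal operator `Mf(x) = sup_{t>0} |f ∗ p_t(x)|` (valued in `ℝ≥0∞`). -/
def maxHeat (f : G → ℝ) (x : G) : ℝ≥0∞ :=
  ⨆ (t : ℝ) (_ : 0 < t), ENNReal.ofReal |convHeat f t x|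

/-- Calderón–Zygmund sets. -/
def IsCZ (R : Set G) : Prop :=
  ∃ c : G, ∃ L r : ℝ, 0 < c.2.2 ∧ 0 < L ∧ 0 < r ∧
    R = Set.Icc (c.1 - L/2) (c.1 + L/2) ×ˢ
        (Set.Icc (c.2.1 - L/2) (c.2.1 + L/2) ×ˢ
         Set.Icc (c.2.2 * Real.exp (-r)) (c.2.2 * Real.exp r)) ∧
    (r < 1 → Real.exp 2 * c.2.2 * r ≤ L ∧ L < Real.exp 8 * c.2.2 * r) ∧
    (1 ≤ r → c.2.2 * Real.exp (2*r) ≤ L ∧ L < c.2.2 * Real.exp (8*r))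

/-- Atoms: `A ∈ L¹(ρ)` supported in a Calderón–Zygmund set `R`, with
`‖A‖_∞ ≤ ρ(R)⁻¹` and `∫ A dρ = 0`. -/
def IsAtomG (A : G → ℝ) : Prop :=
  Integrable A ρG ∧
  ∃ R : Set G, IsCZ R ∧ (∀ x ∉ R, A x = 0) ∧
    eLpNorm A ⊤ ρG ≤ (ρG R)⁻¹ ∧
    ∫ x, A x ∂ρG = 0

/-- `f = Σ_j lam_j A_j` with atoms `A_j`, `Σ_j |lam_j| < ∞`, converging in `L¹(ρ)`. -/
def IsH1Decomp (f : G → ℝ) (lam : ℕ → ℝ) (A : ℕ → G → ℝ) : Prop :=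
  (∀ j, IsAtomG (A j)) ∧ Summable (fun j => |lam j|) ∧
  Tendsto (fun N => eLpNorm (fun x => f x - ∑ j ∈ Finset.range N, lam j * A j x) 1 ρG)
    atTop (nhds 0)

/-- The Hardy space `H¹`. -/
def MemH1 (f : G → ℝ) : Prop :=
  Integrable f ρG ∧ ∃ lam A, IsH1Decomp f lam A

/-- `‖f‖_{H¹} = inf Σ_j |lam_j|` over all atomic decompositions. -/
def H1norm (f : G → ℝ) : ℝ :=
  sInf {s | ∃ lam A, IsH1Decomp f lam A ∧ s = ∑' j, |lam j|}

/-- The left-invariant vector field `X₀ = a ∂_a`. -/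
def X0 (f : G → ℝ) (x : G) : ℝ := x.2.2 * deriv (fun s => f (x.1, x.2.1, s)) x.2.2

/-- The left-invariant vector field `X₁ = a ∂_{x₁}`. -/
def X1 (f : G → ℝ) (x : G) : ℝ := x.2.2 * deriv (fun s => f (s, x.2.1, x.2.2)) x.1

/-- The left-invariant vector field `X₂ = a ∂_{x₂}`. -/
def X2 (f : G → ℝ) (x : G) : ℝ := x.2.2 * deriv (fun s => f (x.1, s, x.2.2)) x.2.1

/-- `‖∇p_t(x)‖`, the Euclidean norm of `(X₀p_t, X₁p_t, X₂p_t)` at `x`. -/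
def gradHeatNorm (t : ℝ) (x : G) : ℝ :=
  Real.sqrt (X0 (heatK t) x ^ 2 + X1 (heatK t) x ^ 2 + X2 (heatK t) x ^ 2)

/-- The Poisson kernel `q_t(x) = π⁻² δ(x)^{1/2} (r(x)/sinh r(x)) · t/(t²+r(x)²)²`. -/
def poissonK (t : ℝ) (x : G) : ℝ :=
  (Real.pi ^ 2)⁻¹ * Real.sqrt (deltaG x) *
    (if rG x = 0 then 1 else rG x / Real.sinh (rG x)) *
    (t / (t ^ 2 + rG x ^ 2) ^ 2)

/-- Convolution `f ∗ q_t(x) = ∫ f(xy⁻¹) q_t(y) dρ(y)`. -/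
def convPoisson (f : G → ℝ) (t : ℝ) (x : G) : ℝ := ∫ y, f (gMul x (gInv y)) * poissonK t y ∂ρG

/-- The Poisson maximal operator `M̃f(x) = sup_{t>0} |f ∗ q_t(x)|`. -/
def maxPoisson (f : G → ℝ) (x : G) : ℝ≥0∞ :=
  ⨆ (t : ℝ) (_ : 0 < t), ENNReal.ofReal |convPoisson f t x|

/-- `G_{r₁}(x) = sup_{z ∈ B(x,r₁/2)} sup_{t>0} ‖∇p_t(z)‖`. -/
def Gsup (r1 : ℝ) (x : G) : ℝ≥0∞ :=
  ⨆ (z : G) (_ : 0 < z.2.2 ∧ dG x z < r1 / 2) (t : ℝ) (_ : 0 < t),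
    ENNReal.ofReal (gradHeatNorm t z)

/-- `R₀ = [−1,1]×[−1,1]×[e⁻¹,e]`. -/
def R0set : Set G :=
  Set.Icc (-1 : ℝ) 1 ×ˢ (Set.Icc (-1 : ℝ) 1 ×ˢ Set.Icc (Real.exp (-1)) (Real.exp 1))

/-- `R_L = [L−1,L+1]×[−1,1]×[e⁻¹,e]`. -/
def RLset (L : ℝ) : Set G :=
  Set.Icc (L - 1) (L + 1) ×ˢ (Set.Icc (-1 : ℝ) 1 ×ˢ Set.Icc (Real.exp (-1)) (Real.exp 1))

/-- `f_L = χ_{R_L} − χ_{R₀}`. -/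
def fL (L : ℝ) : G → ℝ := fun x =>
  (RLset L).indicator (fun _ => (1 : ℝ)) x - R0set.indicator (fun _ => (1 : ℝ)) x

/-- The mean of `g` over `R` with respect to `ρ`. -/
def czMean (g : G → ℝ) (R : Set G) : ℝ := (∫ x in R, g x ∂ρG) / (ρG R).toReal

/-- `‖g‖_{BMO} = sup_R ρ(R)⁻¹ ∫_R |g − g_R| dρ` over Calderón–Zygmund sets `R`. -/
def czBMO (g : G → ℝ) : ℝ≥0∞ :=
  ⨆ (R : Set G) (_ : IsCZ R),
    (ρG R)⁻¹ * ∫⁻ x in R, ENNReal.ofReal |g x - czMean g R| ∂ρG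

/-- `‖h‖_{BMO(ℝ)} = sup_Q |Q|⁻¹ ∫_Q |h − h_Q|` over bounded intervals `Q ⊂ ℝ`. -/
def lineBMO (h : ℝ → ℝ) : ℝ≥0∞ :=
  ⨆ (a : ℝ) (b : ℝ) (_ : a < b),
    (ENNReal.ofReal (b - a))⁻¹ *
      ∫⁻ s in Set.Icc a b, ENNReal.ofReal |h s - (∫ u in Set.Icc a b, h u) / (b - a)|

/-- `2R₀ = [−2,2]×[−2,2]×[e⁻²,e²]`. -/
def twoR0set : Set G :=
  Set.Icc (-2 : ℝ) 2 ×ˢ (Set.Icc (-2 : ℝ) 2 ×ˢ Set.Icc (Real.exp (-2)) (Real.exp 2))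

/-- The set `{x₁ > 3, |x₂| < 1, e⁻¹ < a < e}`. -/
def domSpecial : Set G :=
  {x : G | 3 < x.1 ∧ |x.2.1| < 1 ∧ Real.exp (-1) < x.2.2 ∧ x.2.2 < Real.exp 1}

/-- The function equal to `1/(x₁ (log x₁)^{3/2})` on `{x₁ > 3, |x₂| < 1, e⁻¹ < a < e}`,
to `c₀` on `R₀`, and `0` elsewhere. -/
def fSpecial (c0 : ℝ) : G → ℝ := fun x =>
  domSpecial.indicator (fun y => (y.1 * Real.log y.1 ^ ((3 : ℝ)/2))⁻¹) x
    + R0set.indicator (fun _ => c0) x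

lemma measurable_wG : Measurable fun x : G => ENNReal.ofReal (if 0 < x.2.2 then x.2.2⁻¹ else 0) := by
  apply ENNReal.measurable_ofReal.comp
  apply Measurable.ite
  · exact measurableSet_lt measurable_const (by fun_prop)
  · fun_prop
  · fun_prop

lemma lint_rho (F : G → ℝ≥0∞) (hF : Measurable F) :
    ∫⁻ x, F x ∂ρG = ∫⁻ u : ℝ, ∫⁻ x1 : ℝ, ∫⁻ x2 : ℝ, F (x1, x2, Real.exp u) := by
  unfold ρG
  rw [lintegral_withDensity_eq_lintegral_mul _ measurable_wG hF]
  set w : ℝ → ℝ≥0∞ := fun a => ENNReal.ofReal (if 0 < a then a⁻¹ else 0) with hw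
  have hwm : Measurable w := by
    apply ENNReal.measurable_ofReal.comp
    apply Measurable.ite
    · exact measurableSet_lt measurable_const (by fun_prop)
    · fun_prop
    · fun_prop
  have hm : Measurable (fun x : G => w x.2.2 * F x) := by fun_prop
  have e1 : ∫⁻ x : G, ((fun x : G => ENNReal.ofReal (if 0 < x.2.2 then x.2.2⁻¹ else 0)) * F) x
      = ∫⁻ x1 : ℝ, ∫⁻ a : ℝ, ∫⁻ x2 : ℝ, w a * F (x1, x2, a) := by
    change ∫⁻ x : G, w x.2.2 * F x = _
    rw [Measure.volume_eq_prod, lintegral_prod _ hm.aemeasurable]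
    refine lintegral_congr fun x1 => ?_
    rw [Measure.volume_eq_prod, lintegral_prod_symm _ (by fun_prop)]
  rw [e1, lintegral_lintegral_swap]
  · have e2 : ∀ a : ℝ, ∫⁻ x1 : ℝ, ∫⁻ x2 : ℝ, w a * F (x1, x2, a) =
        w a * ∫⁻ x1 : ℝ, ∫⁻ x2 : ℝ, F (x1, x2, a) := by
      intro a
      rw [← lintegral_const_mul _ (by fun_prop)]
      refine lintegral_congr fun x1 => ?_
      rw [← lintegral_const_mul _ (by fun_prop)]
    simp_rw [e2]
    have e3 : ∫⁻ a : ℝ, w a * ∫⁻ x1 : ℝ, ∫⁻ x2 : ℝ, F (x1, x2, a) =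
        ∫⁻ a in Ioi (0:ℝ), w a * ∫⁻ x1 : ℝ, ∫⁻ x2 : ℝ, F (x1, x2, a) := by
      rw [← lintegral_indicator measurableSet_Ioi]
      refine lintegral_congr fun a => ?_
      by_cases h : 0 < a
      · simp [indicator, h]
      · simp [indicator, h, hw]
    rw [e3]
    have := lintegral_image_eq_lintegral_abs_deriv_mul (s := univ) (f := Real.exp) (f' := Real.exp)
      MeasurableSet.univ (fun x _ => (Real.hasDerivAt_exp x).hasDerivWithinAt)
      (Real.exp_injective.injOn) (fun a => w a * ∫⁻ x1 : ℝ, ∫⁻ x2 : ℝ, F (x1, x2, a))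
    rw [image_univ, Real.range_exp] at this
    rw [this, setLIntegral_univ]
    refine lintegral_congr fun u => ?_
    rw [← mul_assoc, hw]
    simp only [Real.exp_pos, if_true]
    rw [← ENNReal.ofReal_mul (abs_nonneg _), abs_of_pos (Real.exp_pos _),
      mul_inv_cancel₀ (Real.exp_pos _).ne', ENNReal.ofReal_one, one_mul]
  · have : Measurable (fun p : (ℝ × ℝ) × ℝ => w p.1.2 * F (p.1.1, p.2, p.1.2)) := by fun_prop
    exact (this.lintegral_prod_right' (ν := volume)).aemeasurable

lemma lint_affine (f : ℝ → ℝ≥0∞) (x c : ℝ) (hc : 0 < c) :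
    ∫⁻ y, f (x + c * y) = ENNReal.ofReal c⁻¹ * ∫⁻ y, f y := by
  have h := lintegral_image_eq_lintegral_abs_deriv_mul (s := univ) (f := fun y => x + c * y)
      (f' := fun _ => c) MeasurableSet.univ
      (fun y _ => by
        have := ((hasDerivAt_id y).const_mul c).const_add x
        simpa using this)
      (fun a _ b _ hab => by
        have : c * a = c * b := by simpa using hab
        exact mul_left_cancel₀ hc.ne' this) f
  have hr : (fun y => x + c * y) '' univ = univ := by
    rw [image_univ]; apply Function.Surjective.range_eq
    intro z; exact ⟨(z - x) / c, by field_simp; ring⟩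
  rw [hr, setLIntegral_univ, setLIntegral_univ] at h
  rw [h, abs_of_pos hc, lintegral_const_mul' _ _ ENNReal.ofReal_ne_top, ← mul_assoc,
    ← ENNReal.ofReal_mul (by positivity), inv_mul_cancel₀ hc.ne', ENNReal.ofReal_one, one_mul]

lemma lint_affine_neg (f : ℝ → ℝ≥0∞) (x c : ℝ) (hc : 0 < c) :
    ∫⁻ y, f (x - c * y) = ENNReal.ofReal c⁻¹ * ∫⁻ y, f y := by
  rw [← lint_affine f x c hc]
  rw [← lintegral_sub_left_eq_self (μ := volume) (fun y => f (x + c * y)) 0]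
  refine lintegral_congr fun y => ?_
  congr 1; ring

/-- change of variables `z = x y⁻¹` -/
lemma lint_T (x : G) (hx : 0 < x.2.2) (F : G → ℝ≥0∞) (hF : Measurable F) :
    ∫⁻ y, F (gMul x (gInv y)) ∂ρG = ∫⁻ z, ENNReal.ofReal (deltaG z) * F z ∂ρG := by
  rw [lint_rho (fun y => F (gMul x (gInv y))) (by unfold gMul gInv; fun_prop), lint_rho _ (by unfold deltaG; fun_prop)]
  rw [← lintegral_sub_left_eq_self (μ := volume) _ (Real.log x.2.2)]
  refine lintegral_congr fun u => ?_
  have hc : ∀ y1 y2, gMul x (gInv (y1, y2, Real.exp (Real.log x.2.2 - u))) =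
      (x.1 - Real.exp u * y1, x.2.1 - Real.exp u * y2, Real.exp u) := by
    intro y1 y2
    have e : Real.exp (Real.log x.2.2 - u) = x.2.2 / Real.exp u := by
      rw [Real.exp_sub, Real.exp_log hx]
    have := Real.exp_pos u
    simp only [gMul, gInv, e, Prod.mk.injEq]
    refine ⟨?_, ?_, ?_⟩ <;> field_simp <;> ring
  simp_rw [hc]
  have h1 := lint_affine_neg (fun z1 => ∫⁻ y2, F (z1, x.2.1 - Real.exp u * y2, Real.exp u)) x.1
    (Real.exp u) (Real.exp_pos u)
  rw [h1]
  have h2 : ∀ z1, ∫⁻ y2, F (z1, x.2.1 - Real.exp u * y2, Real.exp u) =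
      ENNReal.ofReal (Real.exp u)⁻¹ * ∫⁻ y2, F (z1, y2, Real.exp u) := fun z1 =>
    lint_affine_neg (fun z2 => F (z1, z2, Real.exp u)) x.2.1 (Real.exp u) (Real.exp_pos u)
  simp_rw [h2, deltaG]
  rw [lintegral_const_mul' _ _ ENNReal.ofReal_ne_top, ← mul_assoc, ← ENNReal.ofReal_mul (by positivity)]
  rw [← lintegral_const_mul' _ _ ENNReal.ofReal_ne_top]
  refine lintegral_congr fun z1 => ?_
  rw [← lintegral_const_mul' _ _ ENNReal.ofReal_ne_top]
  refine lintegral_congr fun z2 => ?_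
  congr 2; rw [sq, mul_inv]

/-- left translation -/
lemma lint_left (c : G) (hc : 0 < c.2.2) (F : G → ℝ≥0∞) (hF : Measurable F) :
    ∫⁻ y, F (gMul c y) ∂ρG = ENNReal.ofReal (deltaG c) * ∫⁻ z, F z ∂ρG := by
  rw [lint_rho (fun y => F (gMul c y)) (by unfold gMul; fun_prop), lint_rho _ hF]
  rw [← lintegral_const_mul' _ _ ENNReal.ofReal_ne_top]
  rw [← lintegral_add_left_eq_self (μ := volume) _ (- Real.log c.2.2)]
  rw [← lintegral_add_left_eq_self (μ := volume) (fun u => ENNReal.ofReal (deltaG c) * _) (-Real.log c.2.2)]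
  rw [← lintegral_add_left_eq_self (μ := volume) (fun u => ENNReal.ofReal (deltaG c) * _) (Real.log c.2.2)]
  refine lintegral_congr fun u => ?_
  have e : c.2.2 * Real.exp (-Real.log c.2.2 + u) = Real.exp u := by
    rw [Real.exp_add, Real.exp_neg, Real.exp_log hc]; field_simp
  simp only [gMul, e]
  have h1 := lint_affine (fun z1 => ∫⁻ y2, F (z1, c.2.1 + c.2.2 * y2, Real.exp u)) c.1 c.2.2 hc
  rw [h1]
  have h2 : ∀ z1, ∫⁻ y2, F (z1, c.2.1 + c.2.2 * y2, Real.exp u) =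
      ENNReal.ofReal (c.2.2)⁻¹ * ∫⁻ y2, F (z1, y2, Real.exp u) := fun z1 =>
    lint_affine (fun z2 => F (z1, z2, Real.exp u)) c.2.1 c.2.2 hc
  simp_rw [h2, deltaG]
  rw [lintegral_const_mul' _ _ ENNReal.ofReal_ne_top, ← mul_assoc, ← ENNReal.ofReal_mul (by positivity)]
  rw [← mul_inv, ← sq]
  simp

lemma map_T (x : G) (hx : 0 < x.2.2) :
    Measure.map (fun y => gMul x (gInv y)) ρG = ρG.withDensity (fun z => ENNReal.ofReal (deltaG z)) := by
  have hm : Measurable (fun y => gMul x (gInv y)) := by unfold gMul gInv; fun_prop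
  refine Measure.ext fun s hs => ?_
  rw [← lintegral_indicator_one hs, lintegral_map (measurable_one.indicator hs) hm,
    lint_T x hx _ (measurable_one.indicator hs), withDensity_apply _ hs, ← lintegral_indicator hs]
  refine lintegral_congr fun z => ?_
  by_cases h : z ∈ s <;> simp [h]

lemma map_left (c : G) (hc : 0 < c.2.2) :
    Measure.map (fun y => gMul c y) ρG = ENNReal.ofReal (deltaG c) • ρG := by
  have hm : Measurable (fun y => gMul c y) := by unfold gMul; fun_prop
  refine Measure.ext fun s hs => ?_
  rw [← lintegral_indicator_one hs, lintegral_map (measurable_one.indicator hs) hm,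
    lint_left c hc _ (measurable_one.indicator hs), Measure.smul_apply, lintegral_indicator_one hs, smul_eq_mul]

lemma ae_pos_rho : ∀ᵐ x ∂ρG, 0 < x.2.2 := by
  unfold ρG
  rw [ae_withDensity_iff measurable_wG]
  filter_upwards with x hx
  by_contra h
  simp [h] at hx


def Np (x y : G) : ℝ := Real.sqrt ((x.1 - y.1)^2 + (x.2.1 - y.2.1)^2 + (x.2.2 + y.2.2)^2)
def Nm (x y : G) : ℝ := Real.sqrt ((x.1 - y.1)^2 + (x.2.1 - y.2.1)^2 + (x.2.2 - y.2.2)^2)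
def DD (x y : G) : ℝ := Real.log ((Np x y + Nm x y)^2 / (4 * (x.2.2 * y.2.2)))
def hh (t d : ℝ) : ℝ := 2 * d * t / (t^2 + d^2)^2
def KK (t : ℝ) (x y : G) : ℝ :=
  (Real.pi ^ 2)⁻¹ * (1 / (x.2.2 * y.2.2)) *
    (if DD x y = 0 then 1 else DD x y / Real.sinh (DD x y)) * (t / (t ^ 2 + DD x y ^ 2) ^ 2)

lemma Np_sq (x y : G) : Np x y ^ 2 = (x.1 - y.1)^2 + (x.2.1 - y.2.1)^2 + (x.2.2 + y.2.2)^2 :=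
  Real.sq_sqrt (by positivity)
lemma Nm_sq (x y : G) : Nm x y ^ 2 = (x.1 - y.1)^2 + (x.2.1 - y.2.1)^2 + (x.2.2 - y.2.2)^2 :=
  Real.sq_sqrt (by positivity)
lemma Np_nonneg (x y : G) : 0 ≤ Np x y := Real.sqrt_nonneg _
lemma Nm_nonneg (x y : G) : 0 ≤ Nm x y := Real.sqrt_nonneg _
lemma Np_Nm (x y : G) : Np x y ^ 2 - Nm x y ^ 2 = 4 * (x.2.2 * y.2.2) := by
  rw [Np_sq, Nm_sq]; ring

lemma Np_pos {x y : G} (hx : 0 < x.2.2) (hy : 0 < y.2.2) : 0 < Np x y := by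
  have := Np_sq x y
  have h : 0 < Np x y ^ 2 := by rw [this]; positivity
  exact (Np_nonneg x y).lt_of_ne' (by intro h0; rw [h0] at h; simp at h)

lemma Nm_lt_Np {x y : G} (hx : 0 < x.2.2) (hy : 0 < y.2.2) : Nm x y < Np x y := by
  have := Np_Nm x y
  have h : 0 < x.2.2 * y.2.2 := by positivity
  exact lt_of_pow_lt_pow_left₀ 2 (Np_nonneg _ _) (by linarith)

lemma Np_ge {x y : G} (hx : 0 < x.2.2) (hy : 0 < y.2.2) : x.2.2 + y.2.2 ≤ Np x y := by
  apply Real.le_sqrt_of_sq_le; nlinarith [sq_nonneg (x.1 - y.1), sq_nonneg (x.2.1 - y.2.1)]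
lemma Nm_ge3 (x y : G) : |x.2.2 - y.2.2| ≤ Nm x y := by
  apply Real.le_sqrt_of_sq_le; rw [sq_abs]; nlinarith [sq_nonneg (x.1 - y.1), sq_nonneg (x.2.1 - y.2.1)]
lemma Nm_ge1 (x y : G) : |x.1 - y.1| ≤ Nm x y := by
  apply Real.le_sqrt_of_sq_le; rw [sq_abs]; nlinarith [sq_nonneg (x.2.2 - y.2.2), sq_nonneg (x.2.1 - y.2.1)]
lemma Nm_ge2 (x y : G) : |x.2.1 - y.2.1| ≤ Nm x y := by
  apply Real.le_sqrt_of_sq_le; rw [sq_abs]; nlinarith [sq_nonneg (x.2.2 - y.2.2), sq_nonneg (x.1 - y.1)]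

lemma exp_DD {x y : G} (hx : 0 < x.2.2) (hy : 0 < y.2.2) :
    Real.exp (DD x y) = (Np x y + Nm x y)^2 / (4 * (x.2.2 * y.2.2)) := by
  have := Np_pos hx hy
  have := Nm_nonneg x y
  exact Real.exp_log (by positivity)

lemma exp_neg_DD {x y : G} (hx : 0 < x.2.2) (hy : 0 < y.2.2) :
    Real.exp (- DD x y) = (Np x y - Nm x y)^2 / (4 * (x.2.2 * y.2.2)) := by
  have h1 := Np_pos hx hy
  have h2 := Nm_nonneg x y
  rw [Real.exp_neg, exp_DD hx hy, inv_div, div_eq_div_iff (by positivity) (by positivity), ← Np_Nm]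
  ring

lemma sinh_DD {x y : G} (hx : 0 < x.2.2) (hy : 0 < y.2.2) :
    Real.sinh (DD x y) = Np x y * Nm x y / (2 * (x.2.2 * y.2.2)) := by
  rw [Real.sinh_eq, exp_neg_DD hx hy, exp_DD hx hy]; field_simp; ring

lemma cosh_DD {x y : G} (hx : 0 < x.2.2) (hy : 0 < y.2.2) :
    Real.cosh (DD x y) = 1 + Nm x y ^ 2 / (2 * (x.2.2 * y.2.2)) := by
  have := Np_Nm x y
  rw [Real.cosh_eq, exp_neg_DD hx hy, exp_DD hx hy]; field_simp; linarith

lemma DD_nonneg {x y : G} (hx : 0 < x.2.2) (hy : 0 < y.2.2) : 0 ≤ DD x y := by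
  rw [← Real.exp_le_exp, exp_DD hx hy, Real.exp_zero, le_div_iff₀ (by positivity), ← Np_Nm]
  nlinarith [Np_nonneg x y, Nm_nonneg x y, mul_nonneg (Np_nonneg x y) (Nm_nonneg x y)]

lemma DD_ne_zero {x y : G} (hx : 0 < x.2.2) (hy : 0 < y.2.2) : DD x y ≠ 0 ↔ Nm x y ≠ 0 := by
  have h := sinh_DD hx hy
  have h1 := Np_pos hx hy
  rw [not_iff_not]
  constructor
  · intro h0
    rw [h0, Real.sinh_zero] at h
    have : Np x y * Nm x y = 0 := by
      by_contra hne
      exact absurd h.symm (div_ne_zero hne (by positivity))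
    exact (mul_eq_zero.1 this).resolve_left h1.ne'
  · intro h0; rw [h0] at h; simpa using h

lemma DD_pos {x y : G} (hx : 0 < x.2.2) (hy : 0 < y.2.2) (h : 0 < Nm x y) : 0 < DD x y :=
  (DD_nonneg hx hy).lt_of_ne' ((DD_ne_zero hx hy).2 h.ne')

lemma rG_eq {x z : G} (hx : 0 < x.2.2) (hz : 0 < z.2.2) : rG (gMul (gInv z) x) = DD x z := by
  have hc : coshArg (gMul (gInv z) x) = (Np x z ^2 + Nm x z ^ 2) / (4 * (x.2.2 * z.2.2)) := by
    rw [Np_sq, Nm_sq]; simp only [coshArg, gMul, gInv]; field_simp; ring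
  have hs : Real.sqrt (coshArg (gMul (gInv z) x) ^ 2 - 1) = Np x z * Nm x z / (2 * (x.2.2 * z.2.2)) := by
    have h1 := Np_nonneg x z
    have h2 := Nm_nonneg x z
    rw [show coshArg (gMul (gInv z) x) ^ 2 - 1 = (Np x z * Nm x z / (2 * (x.2.2 * z.2.2))) ^ 2 by
      rw [hc]
      have e := Np_Nm x z
      have hp : 0 < x.2.2 * z.2.2 := by positivity
      generalize x.2.2 * z.2.2 = p at *
      obtain rfl : p = (Np x z ^ 2 - Nm x z ^ 2) / 4 := by linarith
      have : Np x z ^ 2 - Nm x z ^ 2 ≠ 0 := by intro h; rw [h] at hp; simp at hp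
      field_simp
      ring]
    exact Real.sqrt_sq (by positivity)
  unfold rG DD
  rw [hs, hc]; congr 1; field_simp; ring

lemma KK_eq {x y : G} (hx : 0 < x.2.2) (hy : 0 < y.2.2) (h : Nm x y ≠ 0) (t : ℝ) :
    KK t x y = (Real.pi ^ 2)⁻¹ * (1 / (Np x y * Nm x y)) * hh t (DD x y) := by
  have h1 := Np_pos hx hy
  unfold KK hh
  rw [if_neg ((DD_ne_zero hx hy).2 h), sinh_DD hx hy]
  field_simp

lemma KK_conv {x z : G} (hx : 0 < x.2.2) (hz : 0 < z.2.2) (t : ℝ) :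
    deltaG z * poissonK t (gMul (gInv z) x) = KK t x z := by
  unfold KK poissonK
  rw [rG_eq hx hz]
  have : Real.sqrt (deltaG (gMul (gInv z) x)) = z.2.2 / x.2.2 := by
    rw [Real.sqrt_eq_iff_mul_self_eq_of_pos (by positivity)]
    simp only [deltaG, gMul, gInv]; field_simp
  rw [this]; unfold deltaG
  field_simp

lemma poissonK_eq {z : G} (hz : 0 < z.2.2) (t : ℝ) : poissonK t z = KK t z gE := by
  rw [← KK_conv hz (by simp [gE])]
  simp [gE, deltaG, gMul, gInv]

lemma DD_ge_log {x y : G} (hx : 0 < x.2.2) (hy : 0 < y.2.2) :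
    |Real.log x.2.2 - Real.log y.2.2| ≤ DD x y := by
  have h1 := Np_ge hx hy
  have h2 := Nm_ge3 x y
  have key : ∀ m, 0 ≤ m → 2 * m ≤ Np x y + Nm x y → m ^ 2 / (x.2.2 * y.2.2) ≤ Real.exp (DD x y) := by
    intro m hm h
    rw [exp_DD hx hy, div_le_div_iff₀ (by positivity) (by positivity)]
    have : (2*m)^2 ≤ (Np x y + Nm x y)^2 := pow_le_pow_left₀ (by positivity) h 2
    nlinarith [mul_pos hx hy]
  have ka := key x.2.2 hx.le (by linarith [le_abs_self (x.2.2 - y.2.2)])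
  have kb := key y.2.2 hy.le (by linarith [neg_abs_le (x.2.2 - y.2.2)])
  rw [abs_le']
  constructor
  · rw [← Real.exp_le_exp, Real.exp_sub, Real.exp_log hx, Real.exp_log hy]
    convert ka using 1; field_simp
  · rw [← Real.exp_le_exp, neg_sub, Real.exp_sub, Real.exp_log hx, Real.exp_log hy]
    convert kb using 1; field_simp

lemma DD_ge_ratio {x y : G} (hx : 0 < x.2.2) (hy : 0 < y.2.2) : Nm x y / Np x y ≤ DD x y := by
  have h1 := Np_pos hx hy
  have h2 := Nm_nonneg x y
  have h3 := Nm_lt_Np hx hy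
  have h := Real.one_sub_inv_le_log_of_pos (x := (Np x y + Nm x y)^2 / (4 * (x.2.2 * y.2.2))) (by positivity)
  refine le_trans ?_ h
  rw [inv_div, ← Np_Nm, div_le_iff₀ h1, sub_mul, div_mul_eq_mul_div, le_sub_iff_add_le, ← le_sub_iff_add_le', div_le_iff₀ (by positivity)]
  nlinarith [mul_nonneg h1.le h2, mul_nonneg (mul_nonneg h1.le h2) h2, mul_nonneg (mul_nonneg h2 (sub_pos.2 h3).le) h2, mul_nonneg (mul_nonneg h2 (sub_pos.2 h3).le) h1.le]

lemma Nm_ge_DD {x y : G} (hx : 0 < x.2.2) (hy : 0 < y.2.2) : x.2.2 * y.2.2 * DD x y ^ 2 ≤ Nm x y ^ 2 := by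
  have h := cosh_DD hx hy
  have h2 : 1 + DD x y ^ 2 / 2 ≤ Real.cosh (DD x y) := by
    have h3 := Real.self_le_sinh_iff.2 (show 0 ≤ DD x y / 2 by linarith [DD_nonneg hx hy])
    have h4 : Real.cosh (DD x y) = 1 + 2 * Real.sinh (DD x y / 2) ^ 2 := by
      have := Real.cosh_two_mul (DD x y / 2)
      rw [Real.cosh_sq, show 2 * (DD x y / 2) = DD x y by ring] at this
      rw [this]; ring
    have h5 := pow_le_pow_left₀ (by linarith [DD_nonneg hx hy]) h3 2
    rw [h4]; linarith [h5]
  rw [h] at h2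
  have : DD x y ^2 / 2 ≤ Nm x y ^ 2 / (2 * (x.2.2 * y.2.2)) := by linarith
  rw [div_le_div_iff₀ (by positivity) (by positivity)] at this
  linarith

lemma DD_ge_m {x y : G} (hx : 0 < x.2.2) (hy : 0 < y.2.2) (m : ℝ) (hm : 0 ≤ m)
    (h : m ^ 2 ≤ (x.1 - y.1)^2 + (x.2.1 - y.2.1)^2) : m / y.2.2 ≤ Real.exp (DD x y) := by
  have h1 := Np_sq x y
  have h2 : m ≤ Nm x y := Real.le_sqrt_of_sq_le (by nlinarith [sq_nonneg (x.2.2 - y.2.2)])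
  have h3 := Np_ge hx hy
  rw [exp_DD hx hy, div_le_div_iff₀ (by positivity) (by positivity)]
  have h4 : m * x.2.2 ≤ Np x y * Nm x y := by
    nlinarith [mul_le_mul h3 h2 hm (Np_nonneg _ _), mul_nonneg hm hy.le]
  have h5 : 2 * (m * x.2.2) ≤ Np x y ^ 2 := by
    nlinarith [sq_nonneg (m - x.2.2), mul_pos hx hy, sq_nonneg y.2.2]
  have h6 : 4 * (m * x.2.2) ≤ (Np x y + Nm x y)^2 := by nlinarith [sq_nonneg (Nm x y)]
  nlinarith

lemma sqrt_tri (p q r p' q' r' : ℝ) : Real.sqrt (p^2+q^2+r^2) ≤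
    Real.sqrt (p'^2+q'^2+r'^2) + (|p - p'| + |q - q'| + |r - r'|) := by
  have hS : ∀ z, z ^ 2 ≤ p'^2+q'^2+r'^2 → |z| ≤ Real.sqrt (p'^2+q'^2+r'^2) := fun z hz =>
    Real.le_sqrt_of_sq_le (by rwa [sq_abs])
  have h1 := hS p' (by nlinarith [sq_nonneg q', sq_nonneg r'])
  have h2 := hS q' (by nlinarith [sq_nonneg p', sq_nonneg r'])
  have h3 := hS r' (by nlinarith [sq_nonneg q', sq_nonneg p'])
  have hs := Real.sq_sqrt (show 0 ≤ p'^2+q'^2+r'^2 by positivity)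
  set S := Real.sqrt (p'^2+q'^2+r'^2)
  have hS0 : 0 ≤ S := Real.sqrt_nonneg _
  have key : ∀ z z' : ℝ, |z'| ≤ S → z ^ 2 ≤ z' ^ 2 + 2 * S * |z - z'| + |z - z'|^2 := by
    intro z z' h
    have e : z ^ 2 = z'^2 + 2 * (z' * (z - z')) + |z - z'|^2 := by rw [sq_abs]; ring
    have : z' * (z - z') ≤ S * |z - z'| := by
      calc z' * (z - z') ≤ |z' * (z - z')| := le_abs_self _
        _ = |z'| * |z - z'| := abs_mul _ _
        _ ≤ _ := by gcongr
    linarith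
  apply Real.sqrt_le_iff.2 ⟨by positivity, ?_⟩
  have k1 := key p p' h1
  have k2 := key q q' h2
  have k3 := key r r' h3
  nlinarith [mul_nonneg (abs_nonneg (p-p')) (abs_nonneg (q-q')), mul_nonneg (abs_nonneg (p-p')) (abs_nonneg (r-r')), mul_nonneg (abs_nonneg (r-r')) (abs_nonneg (q-q'))]

lemma Nm_tri (x y z : G) : |Nm x y - Nm x z| ≤ |y.1 - z.1| + |y.2.1 - z.2.1| + |y.2.2 - z.2.2| := by
  have h1 := sqrt_tri (x.1 - y.1) (x.2.1 - y.2.1) (x.2.2 - y.2.2) (x.1 - z.1) (x.2.1 - z.2.1) (x.2.2 - z.2.2)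
  have h2 := sqrt_tri (x.1 - z.1) (x.2.1 - z.2.1) (x.2.2 - z.2.2) (x.1 - y.1) (x.2.1 - y.2.1) (x.2.2 - y.2.2)
  simp only [sub_sub_sub_cancel_left] at h1 h2
  rw [abs_sub_comm z.1, abs_sub_comm z.2.1, abs_sub_comm z.2.2] at h1
  unfold Nm
  rw [abs_le]; constructor <;> linarith

lemma Np_tri (x y z : G) : |Np x y - Np x z| ≤ |y.1 - z.1| + |y.2.1 - z.2.1| + |y.2.2 - z.2.2| := by
  have h1 := sqrt_tri (x.1 - y.1) (x.2.1 - y.2.1) (x.2.2 + y.2.2) (x.1 - z.1) (x.2.1 - z.2.1) (x.2.2 + z.2.2)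
  have h2 := sqrt_tri (x.1 - z.1) (x.2.1 - z.2.1) (x.2.2 + z.2.2) (x.1 - y.1) (x.2.1 - y.2.1) (x.2.2 + y.2.2)
  simp only [sub_sub_sub_cancel_left, add_sub_add_left_eq_sub] at h1 h2
  rw [abs_sub_comm z.1, abs_sub_comm z.2.1] at h1
  rw [abs_sub_comm z.2.2] at h2
  unfold Np
  rw [abs_le]; constructor <;> linarith

lemma hh_nonneg {t d : ℝ} (ht : 0 < t) (hd : 0 ≤ d) : 0 ≤ hh t d := by unfold hh; positivity

lemma hh_le {t d : ℝ} (ht : 0 < t) (hd : 0 < d) : hh t d ≤ 1 / d ^ 2 := by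
  unfold hh
  rw [div_le_div_iff₀ (by positivity) (by positivity)]
  nlinarith [sq_nonneg (t - d), sq_nonneg (t^2 - d^2), mul_pos ht hd, mul_nonneg (sq_nonneg d) (sq_nonneg (t - d)), pow_pos ht 2, pow_pos hd 2, mul_pos (pow_pos ht 2) (pow_pos hd 2), pow_pos ht 4]

lemma hh_lip {t d d' m : ℝ} (ht : 0 < t) (hm : 0 < m) (hd : m ≤ d) (hd' : m ≤ d') :
    |hh t d - hh t d'| ≤ 6 / m ^ 3 * |d - d'| := by
  have := Convex.norm_image_sub_le_of_norm_hasDerivWithin_le (f := hh t)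
    (f' := fun z => 2 * t * (t^2 - 3 * z^2) / (t^2+z^2)^3) (s := Ici m) (x := d') (y := d) (C := 6 / m ^ 3)
    (fun z hz => by
      have hz' : 0 < z := lt_of_lt_of_le hm hz
      have h1 : HasDerivAt (fun z : ℝ => 2 * z * t) (2 * t) z := by
        simpa using ((hasDerivAt_id z).const_mul 2).mul_const t
      have h2 : HasDerivAt (fun z : ℝ => (t^2 + z^2)^2) (2 * (t^2+z^2) * (2 * z)) z := by
        have := (((hasDerivAt_id z).pow 2).const_add (t^2)).pow 2
        refine (this.congr_deriv (by simp)).congr_of_eventuallyEq (Eventually.of_forall fun y => by simp)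
      have h3 := h1.div h2 (by positivity)
      refine HasDerivAt.hasDerivWithinAt ?_
      refine h3.congr_deriv ?_
      field_simp; ring)
    (fun z hz => by
      have hz' : m ≤ z := hz
      have hz0 : 0 < z := lt_of_lt_of_le hm hz
      have e1 : ‖2 * t * (t^2 - 3 * z^2) / (t^2+z^2)^3‖ ≤ 6 / z ^ 3 := by
        rw [Real.norm_eq_abs, abs_div, abs_of_pos (show 0 < (t^2+z^2)^3 by positivity), abs_mul, abs_of_pos (show 0 < 2 * t by positivity),
          div_le_div_iff₀ (by positivity) (by positivity)]
        have a1 : |t^2 - 3 * z^2| ≤ 3 * (t^2 + z^2) := by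
          rw [abs_le]; constructor <;> nlinarith [sq_nonneg t, sq_nonneg z]
        have a2 : t * z ^ 3 ≤ (t^2+z^2)^2 := by
          nlinarith [sq_nonneg (t - z), sq_nonneg (t^2 - z^2), mul_pos ht hz0, mul_nonneg (sq_nonneg z) (sq_nonneg (t - z)), pow_pos ht 4, mul_pos (pow_pos ht 2) (pow_pos hz0 2), pow_pos hz0 4]
        calc 2 * t * |t^2 - 3 * z^2| * z^3 = 2 * |t^2 - 3 * z^2| * (t * z^3) := by ring
          _ ≤ 2 * (3 * (t^2+z^2)) * (t^2+z^2)^2 := by gcongr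
          _ = 6 * (t^2+z^2)^3 := by ring
      refine e1.trans ?_
      gcongr)
    (convex_Ici m) hd' hd
  simpa [Real.norm_eq_abs] using this


lemma KK_nonneg {x y : G} (hx : 0 < x.2.2) (hy : 0 < y.2.2) {t : ℝ} (ht : 0 < t) : 0 ≤ KK t x y := by
  have := DD_nonneg hx hy
  have h2 := Real.sinh_nonneg_iff.2 this
  unfold KK
  split_ifs <;> positivity

lemma pi_inv_le : (Real.pi ^ 2)⁻¹ ≤ 1 := by
  apply inv_le_one_of_one_le₀
  nlinarith [Real.pi_gt_three]

lemma KK_le {x y : G} (hx : 0 < x.2.2) (hy : 0 < y.2.2) (h : 0 < Nm x y) {t : ℝ} (ht : 0 < t) :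
    KK t x y ≤ 1 / (Np x y * Nm x y) * (1 / DD x y ^ 2) := by
  have h1 := Np_pos hx hy
  have hd := DD_pos hx hy h
  have := hh_le ht hd
  have h0 := hh_nonneg ht hd.le
  have h2 := pi_inv_le
  rw [KK_eq hx hy h.ne']
  calc (Real.pi ^ 2)⁻¹ * (1 / (Np x y * Nm x y)) * hh t (DD x y)
      ≤ 1 * (1 / (Np x y * Nm x y)) * (1 / DD x y ^ 2) := by gcongr
    _ = _ := by ring

lemma KK_bdd {x : G} (hx : 0 < x.2.2) {t : ℝ} (ht : 0 < t) :
    ∃ C, ∀ y : G, 0 < y.2.2 → |KK t x y| ≤ C := by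
  refine ⟨1 / (x.2.2 * (x.2.2 / 2)) * (1 / t ^ 2) + 1 / (x.2.2 * (x.2.2 / 2)) * (t / (t ^ 2) ^ 2), fun y hy => ?_⟩
  rw [abs_of_nonneg (KK_nonneg hx hy ht)]
  have hp := pi_inv_le
  by_cases h : x.2.2 / 2 ≤ Nm x y
  · have h0 : 0 < Nm x y := by linarith
    have h1 := Np_ge hx hy
    have h1' := Np_pos hx hy
    have h2 : x.2.2 ≤ Np x y := by linarith
    have hd := DD_pos hx hy h0
    have h3 : hh t (DD x y) ≤ 1 / t ^ 2 := by
      unfold hh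
      rw [div_le_div_iff₀ (by positivity) (by positivity)]
      generalize DD x y = d at *
      nlinarith [sq_nonneg (t - d), mul_nonneg (sq_nonneg t) (sq_nonneg (t - d)), pow_pos hd 4, mul_pos (pow_pos ht 2) (pow_pos hd 2)]
    have h4 := hh_nonneg ht hd.le
    rw [KK_eq hx hy h0.ne']
    calc (Real.pi ^ 2)⁻¹ * (1 / (Np x y * Nm x y)) * hh t (DD x y)
      ≤ 1 * (1 / (x.2.2 * (x.2.2 / 2))) * (1 / t ^ 2) := by gcongr
      _ ≤ _ := by rw [one_mul]; apply le_add_of_nonneg_right; positivity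
  · have h1 := Nm_ge3 x y
    have h2 : x.2.2 / 2 ≤ y.2.2 := by linarith [le_abs_self (x.2.2 - y.2.2)]
    have hd := DD_nonneg hx hy
    have h3 : (if DD x y = 0 then 1 else DD x y / Real.sinh (DD x y)) ≤ 1 := by
      split_ifs with h
      · rfl
      · exact div_le_one_of_le₀ (Real.self_le_sinh_iff.2 hd) (Real.sinh_nonneg_iff.2 hd)
    have h4 : (0:ℝ) ≤ (if DD x y = 0 then 1 else DD x y / Real.sinh (DD x y)) := by
      have h2 := Real.sinh_nonneg_iff.2 hd
      split_ifs <;> positivity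
    unfold KK
    calc _ ≤ 1 * (1 / (x.2.2 * (x.2.2 / 2))) * 1 * (t / (t ^ 2) ^ 2) := by
          gcongr
          nlinarith [sq_nonneg (DD x y)]
      _ ≤ _ := by rw [one_mul, mul_one]; apply le_add_of_nonneg_left; positivity

lemma measurable_Np : Measurable fun p : G × G => Np p.1 p.2 := by unfold Np; fun_prop
lemma measurable_Nm : Measurable fun p : G × G => Nm p.1 p.2 := by unfold Nm; fun_prop
lemma measurable_DD : Measurable fun p : G × G => DD p.1 p.2 := by
  unfold DD
  have := measurable_Np
  have := measurable_Nm
  fun_prop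
lemma measurable_KK (t : ℝ) : Measurable fun p : G × G => KK t p.1 p.2 := by
  unfold KK
  have h := measurable_DD
  have h2 : Measurable fun p : G × G => (if DD p.1 p.2 = 0 then 1 else DD p.1 p.2 / Real.sinh (DD p.1 p.2)) :=
    Measurable.ite (measurableSet_eq_fun h measurable_const) measurable_const
      (h.div (Real.measurable_sinh.comp h))
  fun_prop
lemma measurable_KK' (t : ℝ) (x : G) : Measurable (KK t x) :=
  (measurable_KK t).comp (measurable_prodMk_left (x := x))

lemma integrable_KK {f : G → ℝ} (hf : Integrable f ρG) {x : G} (hx : 0 < x.2.2) {t : ℝ} (ht : 0 < t) :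
    Integrable (fun z => f z * KK t x z) ρG := by
  obtain ⟨C, hC⟩ := KK_bdd hx ht
  refine hf.mul_bdd (c := C) (measurable_KK' t x).aestronglyMeasurable ?_
  filter_upwards [ae_pos_rho] with y hy
  exact hC y hy

lemma convPoisson_eq {f : G → ℝ} (hf : AEStronglyMeasurable f ρG) {x : G} (hx : 0 < x.2.2) (t : ℝ) :
    convPoisson f t x = ∫ z, f z * KK t x z ∂ρG := by
  have hm : Measurable (fun y => gMul x (gInv y)) := by unfold gMul gInv; fun_prop
  have hdm : Measurable fun z : G => ENNReal.ofReal (deltaG z) := by unfold deltaG; fun_prop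
  have hqm : Measurable fun z : G => poissonK t (gMul (gInv z) x) := by
    have hg : Measurable fun z : G => gMul (gInv z) x := by unfold gMul gInv; fun_prop
    have h2 : Measurable (poissonK t) := by
      have hr : Measurable rG := by unfold rG coshArg; fun_prop
      have h2 : Measurable fun x : G => (if rG x = 0 then 1 else rG x / Real.sinh (rG x)) :=
        Measurable.ite (measurableSet_eq_fun hr measurable_const) measurable_const
        (hr.div (Real.measurable_sinh.comp hr))
      unfold poissonK deltaG
      fun_prop
    exact h2.comp hg
  have e1 : convPoisson f t x = ∫ y, (fun z => f z * poissonK t (gMul (gInv z) x)) (gMul x (gInv y)) ∂ρG := by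
    unfold convPoisson
    refine integral_congr_ae ?_
    filter_upwards [ae_pos_rho] with y hy
    have : gMul (gInv (gMul x (gInv y))) x = y := by
      obtain ⟨y1, y2, b⟩ := y
      simp only [gMul, gInv, Prod.mk.injEq] at *
      refine ⟨?_, ?_, ?_⟩ <;> field_simp <;> ring
    simp only [this]
  have hfm : AEStronglyMeasurable (fun z => f z * poissonK t (gMul (gInv z) x))
      (Measure.map (fun y => gMul x (gInv y)) ρG) := by
    rw [map_T x hx]
    exact (hf.mono_ac (withDensity_absolutelyContinuous _ _)).mul hqm.aestronglyMeasurable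
  rw [e1, ← integral_map hm.aemeasurable hfm, map_T x hx, integral_withDensity_eq_integral_toReal_smul hdm]
  · refine integral_congr_ae ?_
    filter_upwards [ae_pos_rho] with z hz
    rw [← KK_conv hx hz, ENNReal.toReal_ofReal (by unfold deltaG; positivity), smul_eq_mul]; ring
  · simp

lemma log_div_abs_le {p q m : ℝ} (hm : 0 < m) (hp : m ≤ p) (hq : m ≤ q) :
    |Real.log p - Real.log q| ≤ |p - q| / m := by
  have key : ∀ p q : ℝ, m ≤ p → m ≤ q → Real.log p - Real.log q ≤ |p - q| / m := by
    intro p q hp hq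
    have hp0 : 0 < p := by linarith
    have hq0 : 0 < q := by linarith
    rw [← Real.log_div hp0.ne' hq0.ne']
    refine (Real.log_le_sub_one_of_pos (by positivity)).trans ?_
    calc p / q - 1 = (p - q) / q := by field_simp
      _ ≤ |p - q| / q := by gcongr; exact le_abs_self _
      _ ≤ |p - q| / m := by gcongr
  rw [abs_le']
  refine ⟨key p q hp hq, ?_⟩
  rw [neg_sub, abs_sub_comm]; exact key q p hq hp

lemma DD_eq {x y : G} (hx : 0 < x.2.2) (hy : 0 < y.2.2) :
    DD x y = 2 * Real.log (Np x y + Nm x y) - Real.log 4 - Real.log x.2.2 - Real.log y.2.2 := by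
  have := Np_pos hx hy
  have := Nm_nonneg x y
  unfold DD
  rw [Real.log_div (by positivity) (by positivity), Real.log_pow, Real.log_mul (by positivity) (by positivity),
    Real.log_mul (by positivity) (by positivity)]
  push_cast; ring

lemma gE_pos : 0 < gE.2.2 := by simp [gE]

lemma KK_diff {x y : G} (hx : 0 < x.2.2) (hy : 0 < y.2.2) {t Δ V : ℝ} (ht : 0 < t)
    (hN : 0 < Nm x gE)
    (hΔ : |y.1| + |y.2.1| + |y.2.2 - 1| ≤ Δ) (hΔN : Δ ≤ Nm x gE / 2) (hV : |Real.log y.2.2| ≤ V)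
    (hD : 8 * Δ / Np x gE + V ≤ DD x gE / 2) :
    |KK t x y - KK t x gE| ≤ 6 * Δ / (Nm x gE ^ 2 * Np x gE * DD x gE ^ 2)
      + 192 * (8 * Δ / Np x gE + V) / (Nm x gE * Np x gE * DD x gE ^ 3) := by
  have he := gE_pos
  have t1 : |Nm x y - Nm x gE| ≤ Δ := (Nm_tri x y gE).trans (by simpa [gE] using hΔ)
  have t2 : |Np x y - Np x gE| ≤ Δ := (Np_tri x y gE).trans (by simpa [gE] using hΔ)
  have hDpos := DD_pos hx he hN
  have hlt := Nm_lt_Np hx he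
  have hDe := DD_eq hx he
  have hDy := DD_eq hx hy
  have hΔ0 : 0 ≤ Δ := le_trans (by positivity) hΔ
  have hW1 : Nm x gE / 2 ≤ Nm x y := by linarith [(abs_le.1 t1).1]
  have hW2 : Np x gE / 2 ≤ Np x y := by linarith [(abs_le.1 t2).1]
  have hNy : 0 < Nm x y := by linarith
  rw [KK_eq hx hy hNy.ne', KK_eq hx he hN.ne']
  have hpi := pi_inv_le
  have hpi0 : 0 ≤ (Real.pi ^ 2)⁻¹ := by positivity
  have hle : gE.2.2 = 1 := rfl
  rw [hle, Real.log_one] at hDe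
  generalize Nm x gE = n at *
  generalize Np x gE = p at *
  generalize Nm x y = n' at *
  generalize Np x y = p' at *
  generalize DD x gE = d at *
  generalize DD x y = d' at *
  have hp : 0 < p := by linarith
  have hp' : 0 < p' := by linarith
  have hdd : |d' - d| ≤ 8 * Δ / p + V := by
    have h1 := log_div_abs_le (p := p' + n') (q := p + n) (m := p / 2) (by linarith) (by linarith) (by linarith)
    have h2 : |p' + n' - (p + n)| ≤ 2 * Δ := by
      rw [abs_le] at *; constructor <;> linarith [t1.1, t1.2, t2.1, t2.2]
    have h3 : |p' + n' - (p + n)| / (p/2) ≤ 4 * Δ / p := by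
      rw [div_le_div_iff₀ (by positivity) hp]; nlinarith
    have h4 : |d' - d| ≤ 2 * |Real.log (p' + n') - Real.log (p + n)| + |Real.log y.2.2| := by
      rw [hDe, hDy]
      calc |_| = |2 * (Real.log (p' + n') - Real.log (p + n)) + (- Real.log y.2.2)| := by congr 1; ring
        _ ≤ _ := by
          refine (abs_add_le _ _).trans ?_
          rw [abs_mul, abs_neg, abs_two]
    have : 8 * Δ / p = 2 * (4 * Δ / p) := by ring
    linarith
  have hd' : d / 2 ≤ d' := by linarith [(abs_le.1 hdd).1]
  have hlip := hh_lip ht (show 0 < d / 2 by linarith) hd' (show d / 2 ≤ d by linarith)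
  have hhle := hh_le ht hDpos
  have hh0 := hh_nonneg ht hDpos.le
  have hWW : |1 / (p' * n') - 1 / (p * n)| ≤ 6 * Δ / (n ^ 2 * p) := by
    have e : 1 / (p' * n') - 1 / (p * n) = (n - n') / (n * n' * p) + (p - p') / (n' * p * p') := by
      field_simp; ring
    rw [e]
    refine (abs_add_le _ _).trans ?_
    rw [abs_div, abs_div, abs_of_pos (show 0 < n * n' * p by positivity), abs_of_pos (show 0 < n' * p * p' by positivity),
      abs_sub_comm n, abs_sub_comm p]
    have a1 : |n' - n| / (n * n' * p) ≤ Δ / (n * (n/2) * p) := by gcongr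
    have a2 : |p' - p| / (n' * p * p') ≤ Δ / ((n/2) * p * (n / 2)) := by gcongr; linarith
    refine (add_le_add a1 a2).trans (le_of_eq ?_)
    field_simp; ring
  have hW' : 1 / (p' * n') ≤ 4 / (n * p) := by
    calc 1 / (p' * n') ≤ 1 / ((p / 2) * (n / 2)) := by gcongr
      _ = _ := by field_simp; ring
  have hV0 : 0 ≤ 8 * Δ / p + V := (abs_nonneg _).trans hdd
  have e : (Real.pi ^ 2)⁻¹ * (1 / (p' * n')) * hh t d' - (Real.pi ^ 2)⁻¹ * (1 / (p * n)) * hh t d =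
      (Real.pi ^ 2)⁻¹ * ((1 / (p' * n') - 1 / (p * n)) * hh t d + (1 / (p' * n')) * (hh t d' - hh t d)) := by ring
  rw [e, abs_mul, abs_of_nonneg hpi0]
  calc _ ≤ 1 * (|1 / (p' * n') - 1 / (p * n)| * hh t d + (1 / (p' * n')) * |hh t d' - hh t d|) := by
        gcongr
        refine (abs_add_le _ _).trans ?_
        rw [abs_mul, abs_mul, abs_of_nonneg hh0, abs_of_pos (show 0 < 1 / (p' * n') by positivity)]
    _ ≤ 1 * (6 * Δ / (n ^ 2 * p) * (1 / d ^ 2) + (4 / (n * p)) * (6 / (d/2)^3 * (8 * Δ / p + V))) := by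
        gcongr
        refine hlip.trans ?_
        gcongr
    _ = _ := by field_simp; ring


lemma cauchy_lint {m : ℝ} (hm : 0 < m) :
    ∫⁻ u : ℝ, ENNReal.ofReal (1 / (u ^ 2 + m ^ 2)) = ENNReal.ofReal (Real.pi / m) := by
  have h1 : ∫⁻ u : ℝ, ENNReal.ofReal ((1 + u ^ 2)⁻¹) = ENNReal.ofReal Real.pi := by
    rw [← integral_univ_inv_one_add_sq, ofReal_integral_eq_lintegral_ofReal integrable_inv_one_add_sq]
    filter_upwards with x; positivity
  have h2 := lint_affine (fun u => ENNReal.ofReal ((1 + u ^ 2)⁻¹)) 0 m⁻¹ (by positivity)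
  rw [h1, inv_inv] at h2
  have h3 : ∀ u : ℝ, ENNReal.ofReal (1 / (u ^ 2 + m ^ 2)) =
      ENNReal.ofReal (1 / m ^ 2) * ENNReal.ofReal ((1 + (0 + m⁻¹ * u) ^ 2)⁻¹) := by
    intro u
    rw [← ENNReal.ofReal_mul (by positivity)]; congr 1; field_simp; ring
  simp_rw [h3]
  rw [lintegral_const_mul' _ _ ENNReal.ofReal_ne_top, h2, ← ENNReal.ofReal_mul (by positivity),
    ← ENNReal.ofReal_mul (by positivity)]
  congr 1; field_simp

/-- radial integration -/
lemma radial_lint (u : ℝ) (g : ℝ → ℝ≥0∞) (hg : Measurable g) :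
    ∫⁻ x1 : ℝ, ∫⁻ x2 : ℝ, ENNReal.ofReal (1 / (Np (x1, x2, Real.exp u) gE * Nm (x1, x2, Real.exp u) gE))
      * g (DD (x1, x2, Real.exp u) gE) ≤ ENNReal.ofReal Real.pi * ∫⁻ r in Ici |u|, g r := by
  have hmN := measurable_Np
  have hmM := measurable_Nm
  have hmD := measurable_DD
  set a := Real.exp u with ha
  have ha0 : 0 < a := Real.exp_pos u
  let np : ℝ → ℝ := fun R => Real.sqrt (R ^ 2 + (a + 1) ^ 2)
  let nm : ℝ → ℝ := fun R => Real.sqrt (R ^ 2 + (a - 1) ^ 2)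
  let d : ℝ → ℝ := fun R => Real.log ((np R + nm R) ^ 2 / (4 * a))
  have hm1 : Measurable fun p : ℝ × ℝ => Np (p.1, p.2, a) gE :=
    hmN.comp (f := fun p : ℝ × ℝ => (((p.1, p.2, a) : G), gE)) (by fun_prop)
  have hm2 : Measurable fun p : ℝ × ℝ => Nm (p.1, p.2, a) gE :=
    hmM.comp (f := fun p : ℝ × ℝ => (((p.1, p.2, a) : G), gE)) (by fun_prop)
  have hm3 : Measurable fun p : ℝ × ℝ => DD (p.1, p.2, a) gE :=
    hmD.comp (f := fun p : ℝ × ℝ => (((p.1, p.2, a) : G), gE)) (by fun_prop)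
  have hm4 : Measurable fun p : ℝ × ℝ => ENNReal.ofReal (1 / (Np (p.1, p.2, a) gE * Nm (p.1, p.2, a) gE))
      * g (DD (p.1, p.2, a) gE) := by fun_prop
  rw [← lintegral_prod (μ := volume) (ν := volume) (fun p : ℝ × ℝ =>
    ENNReal.ofReal (1 / (Np (p.1, p.2, a) gE * Nm (p.1, p.2, a) gE)) * g (DD (p.1, p.2, a) gE)) hm4.aemeasurable,
    ← Measure.volume_eq_prod, ← lintegral_comp_polarCoord_symm]
  have hNp : ∀ p : ℝ × ℝ, Np (p.1 * Real.cos p.2, p.1 * Real.sin p.2, a) gE = np p.1 := by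
    intro p; simp only [Np, gE, np]; congr 1
    linear_combination p.1 ^ 2 * (Real.sin_sq_add_cos_sq p.2)
  have hNm : ∀ p : ℝ × ℝ, Nm (p.1 * Real.cos p.2, p.1 * Real.sin p.2, a) gE = nm p.1 := by
    intro p; simp only [Nm, gE, nm]; congr 1
    linear_combination p.1 ^ 2 * (Real.sin_sq_add_cos_sq p.2)
  have hDD : ∀ p : ℝ × ℝ, DD (p.1 * Real.cos p.2, p.1 * Real.sin p.2, a) gE = d p.1 := by
    intro p; simp only [DD, d, hNp, hNm]; simp [gE]
  simp only [polarCoord_symm_apply, hNp, hNm, hDD]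
  have hnp : ∀ R, 0 < np R := fun R => Real.sqrt_pos.2 (by positivity)
  have hnm : ∀ R, 0 < R → 0 < nm R := fun R hR => Real.sqrt_pos.2 (by positivity)
  have hder : ∀ R ∈ Ioi (0:ℝ), HasDerivWithinAt d (2 * R / (np R * nm R)) (Ioi 0) R := by
    intro R hR
    have hR' : 0 < R := hR
    have h1 := hnp R
    have h2 := hnm R hR
    have hsq : ∀ c : ℝ, HasDerivAt (fun R : ℝ => R ^ 2 + c) (2 * R) R := fun c => by
      simpa using ((hasDerivAt_id R).pow 2).add_const c
    have e1 : HasDerivAt np (2 * R / (2 * np R)) R := (hsq _).sqrt (by positivity)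
    have e2 : HasDerivAt nm (2 * R / (2 * nm R)) R := (hsq _).sqrt (by positivity)
    have e3 := ((e1.add e2).pow 2).div_const (4 * a)
    have e4 := e3.log (by simp only [Pi.pow_apply, Pi.add_apply]; positivity)
    refine (HasDerivAt.hasDerivWithinAt (HasDerivAt.congr_deriv e4 ?_))
    simp only [Pi.pow_apply, Pi.add_apply]
    field_simp
    push_cast; ring
  have hinj : InjOn d (Ioi 0) := by
    apply StrictMonoOn.injOn
    intro R hR R' hR' hlt
    have hR0 : 0 < R := hR
    have h1 := hnp R
    have h2 := hnm R hR
    have i1 : np R < np R' := Real.sqrt_lt_sqrt (by positivity) (by nlinarith)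
    have i2 : nm R < nm R' := Real.sqrt_lt_sqrt (by positivity) (by nlinarith)
    apply Real.log_lt_log (by positivity)
    gcongr
  have hnpm : Measurable np := by fun_prop
  have hnmm : Measurable nm := by fun_prop
  have hdm : Measurable d := by fun_prop
  rw [polarCoord_target, Measure.volume_eq_prod, ← Measure.prod_restrict,
    lintegral_prod _ (by simp only [smul_eq_mul]; fun_prop)]
  simp only [lintegral_const, Measure.restrict_apply MeasurableSet.univ, univ_inter, Real.volume_Ioo]
  have himg := lintegral_image_eq_lintegral_abs_deriv_mul measurableSet_Ioi hder hinj g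
  have hsub : d '' Ioi 0 ⊆ Ici |u| := by
    rintro _ ⟨R, _, rfl⟩
    have := DD_ge_log (x := (R, 0, a)) (y := gE) ha0 gE_pos
    rw [← hDD (R, 0)]
    simp only [Real.cos_zero, Real.sin_zero, mul_one, mul_zero]
    simpa [gE, ha] using this
  calc _ = ∫⁻ R in Ioi (0:ℝ), ENNReal.ofReal Real.pi * (ENNReal.ofReal |2 * R / (np R * nm R)| * g (d R)) := by
        refine setLIntegral_congr_fun measurableSet_Ioi fun R hR => ?_
        have hR' : 0 < R := hR
        have h1 := hnp R
        have h2 := hnm R hR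
        simp only [smul_eq_mul]
        rw [mul_comm, ← mul_assoc, ← mul_assoc, ← ENNReal.ofReal_mul (by linarith [Real.pi_pos]),
          ← ENNReal.ofReal_mul (by nlinarith [Real.pi_pos]), ← mul_assoc, ← ENNReal.ofReal_mul (by positivity),
          abs_of_pos (by positivity)]
        congr 2; field_simp; ring
    _ = ENNReal.ofReal Real.pi * ∫⁻ r in d '' Ioi 0, g r := by
        rw [lintegral_const_mul' _ _ ENNReal.ofReal_ne_top, himg]
    _ ≤ _ := by gcongr

lemma lint_Ici {g g' : ℝ → ℝ} {a : ℝ} (hd : ∀ x ∈ Ici a, HasDerivAt g (g' x) x)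
    (h0 : ∀ x ∈ Ioi a, 0 ≤ g' x) (hl : Tendsto g atTop (nhds 0)) :
    ∫⁻ r in Ici a, ENNReal.ofReal (g' r) = ENNReal.ofReal (- g a) := by
  rw [setLIntegral_congr (Ioi_ae_eq_Ici (a := a)).symm]
  have hc := (hd a self_mem_Ici).continuousAt.continuousWithinAt (s := Ici a)
  have hd' : ∀ x ∈ Ioi a, HasDerivAt g (g' x) x := fun x hx => hd x (mem_Ici_of_Ioi hx)
  have h1 := integral_Ioi_of_hasDerivAt_of_nonneg hc hd' h0 hl
  have h2 := integrableOn_Ioi_deriv_of_nonneg hc hd' h0 hl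
  rw [← ofReal_integral_eq_lintegral_ofReal h2, h1, zero_sub]
  filter_upwards [self_mem_ae_restrict measurableSet_Ioi] with x hx using h0 x hx

lemma hh_lint {t : ℝ} (ht : 0 < t) (u : ℝ) :
    ∫⁻ r in Ici |u|, ENNReal.ofReal (hh t r) = ENNReal.ofReal (t * (1 / (u ^ 2 + t ^ 2))) := by
  rw [lint_Ici (g := fun r => - t * (t ^ 2 + r ^ 2)⁻¹)]
  · congr 1; rw [sq_abs]; ring
  · intro x _
    have h2 : HasDerivAt (fun r : ℝ => t ^ 2 + r ^ 2) (2 * x) x := by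
      simpa using (hasDerivAt_pow 2 x).const_add (t ^ 2)
    have h3 := (h2.inv (by positivity)).const_mul (-t)
    refine h3.congr_deriv ?_
    unfold hh; field_simp
  · intro x hx
    exact hh_nonneg ht (le_trans (abs_nonneg _) (le_of_lt hx))
  · have : Tendsto (fun r : ℝ => t ^ 2 + r ^ 2) atTop atTop :=
      tendsto_atTop_add_const_left _ _ (tendsto_pow_atTop two_ne_zero)
    simpa using (this.inv_tendsto_atTop).const_mul (-t)

lemma cube_lint {η : ℝ} (hη : 0 < η) (u : ℝ) :
    ∫⁻ r in Ici |u|, ENNReal.ofReal (if η ≤ r then 1 / r ^ 3 else 0) ≤ ENNReal.ofReal (1 / (u ^ 2 + η ^ 2)) := by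
  set m := max |u| η with hm
  have hm0 : 0 < m := lt_of_lt_of_le hη (le_max_right _ _)
  have h1 : ∫⁻ r in Ici |u|, ENNReal.ofReal (if η ≤ r then 1 / r ^ 3 else 0) ≤
      ∫⁻ r in Ici m, ENNReal.ofReal (1 / r ^ 3) := by
    rw [← lintegral_indicator measurableSet_Ici, ← lintegral_indicator measurableSet_Ici]
    refine lintegral_mono fun r => ?_
    by_cases h : |u| ≤ r <;> by_cases h' : η ≤ r <;> simp [indicator, h, h', hm]
  refine h1.trans ?_
  rw [lint_Ici (g := fun r => - (1/2) * (r ^ 2)⁻¹)]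
  · apply ENNReal.ofReal_le_ofReal
    have : u ^ 2 ≤ m ^ 2 := by
      rw [← sq_abs u]; exact pow_le_pow_left₀ (abs_nonneg _) (le_max_left _ _) 2
    have h2 : η ^ 2 ≤ m ^ 2 := pow_le_pow_left₀ hη.le (le_max_right _ _) 2
    have e : -(-(1 / 2) * (m ^ 2)⁻¹) = 1 / (2 * m ^ 2) := by field_simp
    rw [e]
    apply one_div_le_one_div_of_le (by positivity); linarith
  · intro x hx
    have hx0 : 0 < x := lt_of_lt_of_le hm0 hx
    have h2 : HasDerivAt (fun r : ℝ => r ^ 2) (2 * x) x := by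
      simpa using hasDerivAt_pow 2 x
    have h3 := (h2.inv (by positivity)).const_mul (-(1/2))
    refine h3.congr_deriv ?_
    field_simp
  · intro x hx
    have hx0 : 0 < x := lt_trans hm0 hx
    positivity
  · simpa using ((tendsto_pow_atTop (α := ℝ) two_ne_zero).inv_tendsto_atTop).const_mul (-(1/2) : ℝ)

lemma measurable_NpE : Measurable fun z : G => Np z gE := measurable_Np.comp (measurable_id.prodMk measurable_const)
lemma measurable_NmE : Measurable fun z : G => Nm z gE := measurable_Nm.comp (measurable_id.prodMk measurable_const)
lemma measurable_DDE : Measurable fun z : G => DD z gE := by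
  have h1 := measurable_NpE
  have h2 := measurable_NmE
  simp only [DD]
  fun_prop

lemma rho_radial (g : ℝ → ℝ≥0∞) (hg : Measurable g) :
    ∫⁻ z, ENNReal.ofReal (1 / (Np z gE * Nm z gE)) * g (DD z gE) ∂ρG ≤
     ENNReal.ofReal Real.pi * ∫⁻ u : ℝ, ∫⁻ r in Ici |u|, g r := by
  have := measurable_NpE
  have := measurable_NmE
  have := measurable_DDE
  rw [lint_rho _ (by fun_prop), ← lintegral_const_mul' _ _ ENNReal.ofReal_ne_top]
  exact lintegral_mono fun u => radial_lint u g hg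

lemma poisson_lint {t : ℝ} (ht : 0 < t) : ∫⁻ z, ENNReal.ofReal (poissonK t z) ∂ρG ≤ 1 := by
  have hne : ∀ᵐ z ∂ρG, z ≠ gE := by
    have : ρG {gE} = 0 := by
      unfold ρG; exact withDensity_absolutelyContinuous _ _ (by
        have e : ({gE} : Set G) = {(0:ℝ)} ×ˢ ({(0:ℝ)} ×ˢ {(1:ℝ)}) := by
          rw [Set.singleton_prod_singleton, Set.singleton_prod_singleton]; rfl
        rw [e, Measure.volume_eq_prod, Measure.prod_prod, Real.volume_singleton, zero_mul])
    exact measure_eq_zero_iff_ae_notMem.1 this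
  have h : ∫⁻ z, ENNReal.ofReal (poissonK t z) ∂ρG = ENNReal.ofReal ((Real.pi ^ 2)⁻¹) *
     ∫⁻ z, ENNReal.ofReal (1 / (Np z gE * Nm z gE)) * ENNReal.ofReal (hh t (DD z gE)) ∂ρG := by
    rw [← lintegral_const_mul' _ _ ENNReal.ofReal_ne_top]
    refine lintegral_congr_ae ?_
    filter_upwards [hne, ae_pos_rho] with z hz hz0
    have hN : Nm z gE ≠ 0 := by
      intro h0
      apply hz
      have h1 := Nm_ge1 z gE
      have h2 := Nm_ge2 z gE
      have h3 := Nm_ge3 z gE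
      rw [h0] at h1 h2 h3
      have e1 := sub_eq_zero.1 (abs_nonpos_iff.1 h1)
      have e2 := sub_eq_zero.1 (abs_nonpos_iff.1 h2)
      have e3 := sub_eq_zero.1 (abs_nonpos_iff.1 h3)
      exact Prod.ext e1 (Prod.ext e2 e3)
    rw [poissonK_eq hz0, KK_eq hz0 gE_pos hN, ENNReal.ofReal_mul, ENNReal.ofReal_mul, mul_assoc]
    · positivity
    · have := Np_nonneg z gE
      have := Nm_nonneg z gE
      positivity
  rw [h]
  have hm : Measurable fun r => ENNReal.ofReal (hh t r) := by unfold hh; fun_prop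
  calc _ ≤ ENNReal.ofReal ((Real.pi ^ 2)⁻¹) * (ENNReal.ofReal Real.pi * ∫⁻ u : ℝ, ∫⁻ r in Ici |u|, ENNReal.ofReal (hh t r)) := by
        gcongr; exact rho_radial _ hm
    _ = ENNReal.ofReal ((Real.pi ^ 2)⁻¹) * (ENNReal.ofReal Real.pi * (ENNReal.ofReal t * ENNReal.ofReal (Real.pi / t))) := by
        simp_rw [hh_lint ht, ENNReal.ofReal_mul ht.le]
        rw [lintegral_const_mul' _ _ ENNReal.ofReal_ne_top, cauchy_lint ht]
    _ = 1 := by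
        rw [← ENNReal.ofReal_mul (by positivity), ← ENNReal.ofReal_mul (by positivity), ← ENNReal.ofReal_mul (by positivity)]
        rw [← ENNReal.ofReal_one]; congr 1; field_simp

def Q1 (η : ℝ) (z : G) : ℝ≥0∞ :=
  ENNReal.ofReal (1 / (Np z gE * Nm z gE)) * ENNReal.ofReal (if η ≤ DD z gE then 1 / DD z gE ^ 3 else 0)

lemma measurable_Q1 (η : ℝ) : Measurable (Q1 η) := by
  have := measurable_NpE
  have := measurable_NmE
  have := measurable_DDE
  have h : Measurable fun z : G => if η ≤ DD z gE then 1 / DD z gE ^ 3 else 0 :=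
    Measurable.ite (measurableSet_le measurable_const measurable_DDE) (by fun_prop) measurable_const
  unfold Q1; fun_prop

lemma Q1_lint {η : ℝ} (hη : 0 < η) : ∫⁻ z, Q1 η z ∂ρG ≤ ENNReal.ofReal (Real.pi ^ 2 / η) := by
  have hm : Measurable fun r : ℝ => ENNReal.ofReal (if η ≤ r then 1 / r ^ 3 else 0) := by
    apply ENNReal.measurable_ofReal.comp
    exact Measurable.ite (measurableSet_le measurable_const measurable_id) (by fun_prop) measurable_const
  refine (rho_radial _ hm).trans ?_
  calc _ ≤ ENNReal.ofReal Real.pi * ∫⁻ u : ℝ, ENNReal.ofReal (1 / (u ^ 2 + η ^ 2)) := by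
        gcongr with u; exact cube_lint hη u
    _ = _ := by
        rw [cauchy_lint hη, ← ENNReal.ofReal_mul (by positivity)]; congr 1; ring

def Q2 (M : ℝ) (z : G) : ℝ≥0∞ :=
  ENNReal.ofReal (1 / (Real.log z.2.2 ^ 2 + 1 ^ 2)) * (ENNReal.ofReal (M / Real.sqrt (z.1 ^ 2 + M ^ 2)) *
    ENNReal.ofReal (1 / (z.2.1 ^ 2 + Real.sqrt (z.1 ^ 2 + M ^ 2) ^ 2)))

lemma measurable_Q2 (M : ℝ) : Measurable (Q2 M) := by unfold Q2; fun_prop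

lemma Q2_lint {M : ℝ} (hM : 0 < M) : ∫⁻ z, Q2 M z ∂ρG = ENNReal.ofReal (Real.pi ^ 3) := by
  rw [lint_rho _ (measurable_Q2 M)]
  simp only [Q2, Real.log_exp]
  simp_rw [lintegral_const_mul' _ _ ENNReal.ofReal_ne_top]
  have h1 : ∀ x1 : ℝ, ENNReal.ofReal (M / Real.sqrt (x1 ^ 2 + M ^ 2)) *
      ∫⁻ x2 : ℝ, ENNReal.ofReal (1 / (x2 ^ 2 + Real.sqrt (x1 ^ 2 + M ^ 2) ^ 2)) =
      ENNReal.ofReal (M * Real.pi) * ENNReal.ofReal (1 / (x1 ^ 2 + M ^ 2)) := by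
    intro x1
    have : 0 < Real.sqrt (x1 ^ 2 + M ^ 2) := Real.sqrt_pos.2 (by positivity)
    rw [cauchy_lint this, ← ENNReal.ofReal_mul (by positivity), ← ENNReal.ofReal_mul (by positivity)]
    congr 1
    nth_rewrite 3 [← Real.sq_sqrt (show 0 ≤ x1 ^ 2 + M ^ 2 by positivity)]
    field_simp
  simp_rw [h1, lintegral_const_mul' _ _ ENNReal.ofReal_ne_top, cauchy_lint hM]
  rw [lintegral_mul_const' _ _ (ENNReal.mul_ne_top ENNReal.ofReal_ne_top ENNReal.ofReal_ne_top), cauchy_lint one_pos,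
    ← ENNReal.ofReal_mul (by positivity), ← ENNReal.ofReal_mul (by positivity)]
  congr 1; field_simp

lemma box_lint (M : ℝ) (hM : 0 ≤ M) (f : ℝ → ℝ≥0∞) (hf : Measurable f) :
    ∫⁻ z, (Icc (-M) M).indicator 1 z.1 * ((Icc (-M) M).indicator 1 z.2.1 * f (Real.log z.2.2)) ∂ρG =
      ENNReal.ofReal ((2 * M) ^ 2) * ∫⁻ u, f u := by
  have hi : Measurable ((Icc (-M) M).indicator (1 : ℝ → ℝ≥0∞)) := measurable_one.indicator measurableSet_Icc
  have hii : ∫⁻ x, (Icc (-M) M).indicator (1 : ℝ → ℝ≥0∞) x = ENNReal.ofReal (2 * M) := by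
    rw [lintegral_indicator_one measurableSet_Icc, Real.volume_Icc]; congr 1; ring
  rw [lint_rho _ (by fun_prop)]
  simp only [Real.log_exp]
  have h1 : ∀ u x1 : ℝ, ∫⁻ x2 : ℝ, (Icc (-M) M).indicator (1 : ℝ → ℝ≥0∞) x1 * ((Icc (-M) M).indicator (1 : ℝ → ℝ≥0∞) x2 * f u)
     = (Icc (-M) M).indicator (1 : ℝ → ℝ≥0∞) x1 * (ENNReal.ofReal (2 * M) * f u) := by
    intro u x1
    rw [lintegral_const_mul _ (by fun_prop), lintegral_mul_const _ hi, hii]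
  simp_rw [h1]
  simp_rw [lintegral_mul_const _ hi, hii]
  rw [lintegral_const_mul _ (by fun_prop), lintegral_const_mul _ hf, ← mul_assoc, ← ENNReal.ofReal_mul (by positivity)]
  congr 2; ring

def Bx (M m : ℝ) : Set G := Icc (-M) M ×ˢ (Icc (-M) M ×ˢ Icc (Real.exp (-m)) (Real.exp m))

lemma Bx_meas (M m : ℝ) : MeasurableSet (Bx M m) :=
  measurableSet_Icc.prod (measurableSet_Icc.prod measurableSet_Icc)

lemma Bx_ind (M m : ℝ) (z : G) (hz : 0 < z.2.2) : (Bx M m).indicator (1 : G → ℝ≥0∞) z =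
    (Icc (-M) M).indicator 1 z.1 * ((Icc (-M) M).indicator 1 z.2.1 * (Icc (-m) m).indicator 1 (Real.log z.2.2)) := by
  have e : z.2.2 ∈ Icc (Real.exp (-m)) (Real.exp m) ↔ Real.log z.2.2 ∈ Icc (-m) m := by
    rw [mem_Icc, mem_Icc, Real.le_log_iff_exp_le hz, Real.log_le_iff_le_exp hz]
  simp only [indicator, Bx, mem_prod, e]
  by_cases h1 : z.1 ∈ Icc (-M) M <;> by_cases h2 : z.2.1 ∈ Icc (-M) M <;>
    by_cases h3 : Real.log z.2.2 ∈ Icc (-m) m <;> simp [h1, h2, h3]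

lemma rho_Bx (M m : ℝ) (hM : 0 ≤ M) : ρG (Bx M m) = ENNReal.ofReal ((2 * M) ^ 2 * (2 * m)) := by
  rw [← lintegral_indicator_one (Bx_meas M m)]
  have : ∫⁻ z, (Bx M m).indicator (1 : G → ℝ≥0∞) z ∂ρG = _ := lintegral_congr_ae
    (by filter_upwards [ae_pos_rho] with z hz using Bx_ind M m z hz)
  rw [this, box_lint M hM _ (measurable_one.indicator measurableSet_Icc),
    lintegral_indicator_one measurableSet_Icc, Real.volume_Icc, ← ENNReal.ofReal_mul (by positivity)]
  congr 1; ring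

def Q3 (M s : ℝ) (z : G) : ℝ≥0∞ :=
  (Icc (-M) M).indicator 1 z.1 * ((Icc (-M) M).indicator 1 z.2.1 * ENNReal.ofReal (1 / (Real.log z.2.2 ^ 2 + s ^ 2)))

lemma measurable_Q3 (M s : ℝ) : Measurable (Q3 M s) := by
  have hi : Measurable ((Icc (-M) M).indicator (1 : ℝ → ℝ≥0∞)) := measurable_one.indicator measurableSet_Icc
  unfold Q3; fun_prop

lemma Q3_lint {M s : ℝ} (hM : 0 ≤ M) (hs : 0 < s) :
    ∫⁻ z, Q3 M s z ∂ρG = ENNReal.ofReal ((2 * M) ^ 2 * (Real.pi / s)) := by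
  unfold Q3
  rw [box_lint M hM (fun u => ENNReal.ofReal (1 / (u ^ 2 + s ^ 2))) (by fun_prop), cauchy_lint hs,
    ← ENNReal.ofReal_mul (by positivity)]


lemma arsinh_lint {M ε x : ℝ} (hM : 0 ≤ M) (hε : 0 < ε) :
    ∫⁻ y in Icc (-M) M, ENNReal.ofReal (1 / Real.sqrt ((x - y) ^ 2 + ε ^ 2)) ≤
      ENNReal.ofReal (2 * Real.arsinh ((|x| + M) / ε)) := by
  have hpos : ∀ y, 0 < Real.sqrt ((x - y) ^ 2 + ε ^ 2) := fun y => Real.sqrt_pos.2 (by positivity)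
  have hcont : Continuous fun y => 1 / Real.sqrt ((x - y) ^ 2 + ε ^ 2) := by
    apply Continuous.div continuous_const (by fun_prop) (fun y => (hpos y).ne')
  have hd : ∀ y, HasDerivAt (fun y => Real.arsinh ((y - x) / ε)) (1 / Real.sqrt ((x - y) ^ 2 + ε ^ 2)) y := by
    intro y
    have h1 : HasDerivAt (fun y : ℝ => (y - x) / ε) (1 / ε) y :=
      ((hasDerivAt_id y).sub_const x).div_const ε
    have h2 := (Real.hasDerivAt_arsinh ((y - x) / ε)).comp y h1
    refine h2.congr_deriv ?_
    have e : (x - y) ^ 2 + ε ^ 2 = (1 + ((y - x) / ε) ^ 2) * ε ^ 2 := by field_simp; ring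
    rw [e, Real.sqrt_mul (by positivity), Real.sqrt_sq hε.le]
    field_simp
  have hi : ∫ y in (-M)..M, 1 / Real.sqrt ((x - y) ^ 2 + ε ^ 2) =
      Real.arsinh ((M - x) / ε) - Real.arsinh ((-M - x) / ε) :=
    intervalIntegral.integral_eq_sub_of_hasDerivAt (fun y _ => hd y) (hcont.intervalIntegrable _ _)
  rw [← ofReal_integral_eq_lintegral_ofReal (hcont.integrableOn_Icc) (Eventually.of_forall fun y => by positivity),
    integral_Icc_eq_integral_Ioc, ← intervalIntegral.integral_of_le (by linarith), hi]
  apply ENNReal.ofReal_le_ofReal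
  have h1 : Real.arsinh ((M - x) / ε) ≤ Real.arsinh ((|x| + M) / ε) := by
    apply Real.arsinh_le_arsinh.2
    apply div_le_div_of_nonneg_right _ hε.le
    linarith [neg_abs_le x]
  have h2 : - Real.arsinh ((|x| + M) / ε) ≤ Real.arsinh ((-M - x) / ε) := by
    rw [← Real.arsinh_neg]
    apply Real.arsinh_le_arsinh.2
    rw [← neg_div]
    apply div_le_div_of_nonneg_right _ hε.le
    linarith [le_abs_self x]
  linarith

lemma J5 (x1 x2 : ℝ) {M s ε : ℝ} (hM : 0 ≤ M) (hs : 0 ≤ s) (hε : 0 < ε) :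
    ∫⁻ y in Bx M s, ENNReal.ofReal (1 / ((x1 - y.1) ^ 2 + (x2 - y.2.1) ^ 2 + ε ^ 2)) ∂ρG ≤
      ENNReal.ofReal (2 * s * (Real.pi * (2 * Real.arsinh ((|x1| + M) / ε)))) := by
  have hi : Measurable ((Icc (-M) M).indicator (1 : ℝ → ℝ≥0∞)) := measurable_one.indicator measurableSet_Icc
  have hi' : Measurable ((Icc (-s) s).indicator (1 : ℝ → ℝ≥0∞)) := measurable_one.indicator measurableSet_Icc
  set F : G → ℝ≥0∞ := fun y => (Icc (-s) s).indicator 1 (Real.log y.2.2) * ((Icc (-M) M).indicator 1 y.1 *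
    ENNReal.ofReal (1 / ((x1 - y.1) ^ 2 + (x2 - y.2.1) ^ 2 + ε ^ 2))) with hF
  have h1 : ∫⁻ y in Bx M s, ENNReal.ofReal (1 / ((x1 - y.1) ^ 2 + (x2 - y.2.1) ^ 2 + ε ^ 2)) ∂ρG ≤ ∫⁻ y, F y ∂ρG := by
    rw [← lintegral_indicator (Bx_meas M s)]
    refine lintegral_mono fun y => ?_
    by_cases hy : y ∈ Bx M s
    · rw [indicator_of_mem hy]
      obtain ⟨a, b, c⟩ := hy
      have hpos : 0 < y.2.2 := lt_of_lt_of_le (Real.exp_pos _) c.1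
      have c' : Real.log y.2.2 ∈ Icc (-s) s := by
        rw [mem_Icc, Real.le_log_iff_exp_le hpos, Real.log_le_iff_le_exp hpos]; exact c
      simp only [hF]
      rw [indicator_of_mem c', indicator_of_mem a]; simp
    · rw [indicator_of_notMem hy]; exact bot_le
  refine h1.trans ?_
  rw [lint_rho F (by fun_prop)]
  simp only [hF, Real.log_exp]
  have hfin : ∀ (S : Set ℝ) (z : ℝ), S.indicator (1 : ℝ → ℝ≥0∞) z ≠ ⊤ := by
    intro S z; by_cases h : z ∈ S <;> simp [h]
  simp_rw [lintegral_const_mul' _ _ (hfin _ _)]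
  have h2 : ∀ y1 : ℝ, ∫⁻ y2 : ℝ, ENNReal.ofReal (1 / ((x1 - y1) ^ 2 + (x2 - y2) ^ 2 + ε ^ 2)) =
     ENNReal.ofReal Real.pi * ENNReal.ofReal (1 / Real.sqrt ((x1 - y1) ^ 2 + ε ^ 2)) := by
    intro y1
    have hm : 0 < Real.sqrt ((x1 - y1) ^ 2 + ε ^ 2) := Real.sqrt_pos.2 (by positivity)
    have h3 := lintegral_sub_left_eq_self (μ := (volume : Measure ℝ))
      (fun q : ℝ => ENNReal.ofReal (1 / (q ^ 2 + Real.sqrt ((x1 - y1) ^ 2 + ε ^ 2) ^ 2))) x2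
    rw [cauchy_lint hm] at h3
    rw [← ENNReal.ofReal_mul Real.pi_pos.le, mul_one_div, ← h3]
    refine lintegral_congr fun y2 => ?_
    rw [Real.sq_sqrt (by positivity)]; congr 2; ring
  simp_rw [h2]
  have h4 : ∫⁻ y1 : ℝ, (Icc (-M) M).indicator (1 : ℝ → ℝ≥0∞) y1 *
      (ENNReal.ofReal Real.pi * ENNReal.ofReal (1 / Real.sqrt ((x1 - y1) ^ 2 + ε ^ 2))) ≤
      ENNReal.ofReal (Real.pi * (2 * Real.arsinh ((|x1| + M) / ε))) := by
    rw [ENNReal.ofReal_mul Real.pi_pos.le]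
    refine le_trans (le_of_eq ?_) (mul_le_mul_right (arsinh_lint (x := x1) hM hε) _)
    rw [← lintegral_const_mul' _ _ ENNReal.ofReal_ne_top, ← lintegral_indicator measurableSet_Icc]
    refine lintegral_congr fun y1 => ?_
    by_cases h : y1 ∈ Icc (-M) M <;> simp [h]
  rw [lintegral_mul_const' _ _ (ne_top_of_le_ne_top ENNReal.ofReal_ne_top h4),
    lintegral_indicator_one measurableSet_Icc, Real.volume_Icc, ENNReal.ofReal_mul (by positivity : 0 ≤ 2 * s)]
  gcongr
  linarith


structure CAtom (A : G → ℝ) (L s : ℝ) : Prop where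
  int : Integrable A ρG
  supp : ∀ x ∉ Bx (L / 2) s, A x = 0
  bd : eLpNorm A ⊤ ρG ≤ (ρG (Bx (L / 2) s))⁻¹
  mean : ∫ x, A x ∂ρG = 0
  hL : 0 < L
  hs : 0 < s
  h1 : s < 1 → Real.exp 2 * s ≤ L ∧ L < Real.exp 8 * s
  h2 : 1 ≤ s → Real.exp (2 * s) ≤ L ∧ L < Real.exp (8 * s)

lemma Bx_pos {M m : ℝ} {y : G} (hy : y ∈ Bx M m) : 0 < y.2.2 := lt_of_lt_of_le (Real.exp_pos _) hy.2.2.1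

lemma CAtom.rho {A : G → ℝ} {L s : ℝ} (h : CAtom A L s) : ρG (Bx (L / 2) s) = ENNReal.ofReal (2 * s * L ^ 2) := by
  rw [rho_Bx _ _ (by linarith [h.hL])]; congr 1; ring

lemma CAtom.ae {A : G → ℝ} {L s : ℝ} (h : CAtom A L s) : ∀ᵐ y ∂ρG, |A y| ≤ 1 / (2 * s * L ^ 2) := by
  have hL := h.hL
  have hs := h.hs
  have hp : 0 < 2 * s * L ^ 2 := by positivity
  have h1 := h.bd
  rw [h.rho, ← ENNReal.ofReal_inv_of_pos hp, eLpNorm_exponent_top] at h1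
  filter_upwards [ae_le_eLpNormEssSup (f := A) (μ := ρG)] with y hy
  have h3 := hy.trans h1
  rw [Real.enorm_eq_ofReal_abs, ENNReal.ofReal_le_ofReal_iff (by positivity)] at h3
  rw [one_div]; exact h3

lemma CAtom.lint_le {A : G → ℝ} {L s : ℝ} (h : CAtom A L s) (g : G → ℝ) :
    ∫⁻ y, ENNReal.ofReal |A y * g y| ∂ρG ≤
      ENNReal.ofReal (1 / (2 * s * L ^ 2)) * ∫⁻ y in Bx (L / 2) s, ENNReal.ofReal |g y| ∂ρG := by
  rw [← lintegral_const_mul' _ _ ENNReal.ofReal_ne_top, ← lintegral_indicator (Bx_meas _ _)]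
  refine lintegral_mono_ae ?_
  filter_upwards [h.ae] with y hy
  by_cases hm : y ∈ Bx (L / 2) s
  · rw [indicator_of_mem hm, abs_mul, ENNReal.ofReal_mul (abs_nonneg _)]
    gcongr
  · rw [indicator_of_notMem hm, h.supp y hm]; simp

lemma abs_integral_le_lint (f : G → ℝ) {C : ℝ} (hC : 0 ≤ C) (h : ∫⁻ y, ENNReal.ofReal |f y| ∂ρG ≤ ENNReal.ofReal C) :
    |∫ y, f y ∂ρG| ≤ C := by
  have h1 := enorm_integral_le_lintegral_enorm (μ := ρG) f
  simp_rw [Real.enorm_eq_ofReal_abs] at h1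
  exact (ENNReal.ofReal_le_ofReal_iff hC).1 (h1.trans h)

lemma CAtom.cancel {A : G → ℝ} {L s : ℝ} (h : CAtom A L s) {x : G} (hx : 0 < x.2.2) {t : ℝ} (ht : 0 < t) {E : ℝ}
    (hE : ∀ y ∈ Bx (L / 2) s, |KK t x y - KK t x gE| ≤ E) (hE0 : 0 ≤ E) : |convPoisson A t x| ≤ E := by
  have hL := h.hL
  have hs := h.hs
  have e : convPoisson A t x = ∫ y, A y * (KK t x y - KK t x gE) ∂ρG := by
    rw [convPoisson_eq h.int.aestronglyMeasurable hx]
    simp_rw [mul_sub]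
    rw [integral_sub (integrable_KK h.int hx ht) (h.int.mul_const _), integral_mul_const, h.mean]; simp
  rw [e]
  refine abs_integral_le_lint _ hE0 ((h.lint_le _).trans ?_)
  calc _ ≤ ENNReal.ofReal (1 / (2 * s * L ^ 2)) * ∫⁻ y in Bx (L / 2) s, ENNReal.ofReal E ∂ρG := by
        gcongr 1
        refine setLIntegral_mono measurable_const fun y hy => ?_
        exact ENNReal.ofReal_le_ofReal (hE y hy)
    _ = ENNReal.ofReal E := by
        rw [setLIntegral_const, h.rho, ← ENNReal.ofReal_mul hE0, ← ENNReal.ofReal_mul (by positivity)]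
        congr 1; field_simp

lemma CAtom.direct {A : G → ℝ} {L s : ℝ} (h : CAtom A L s) {x : G} (hx : 0 < x.2.2) {t : ℝ} (ht : 0 < t) {K ε : ℝ}
    (hK : 0 ≤ K) (hε : 0 < ε)
    (hE : ∀ y ∈ Bx (L / 2) s, KK t x y ≤ K * (1 / ((x.1 - y.1) ^ 2 + (x.2.1 - y.2.1) ^ 2 + ε ^ 2))) :
    |convPoisson A t x| ≤ 1 / (2 * s * L ^ 2) *
      (K * (2 * s * (Real.pi * (2 * Real.arsinh ((|x.1| + L / 2) / ε))))) := by
  have hL := h.hL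
  have hs := h.hs
  have har : 0 ≤ Real.arsinh ((|x.1| + L / 2) / ε) := Real.arsinh_nonneg_iff.2 (by positivity)
  have hpi := Real.pi_pos
  rw [convPoisson_eq h.int.aestronglyMeasurable hx]
  refine abs_integral_le_lint _ (by positivity) ((h.lint_le _).trans ?_)
  rw [ENNReal.ofReal_mul (by positivity)]
  gcongr 1
  rw [ENNReal.ofReal_mul hK]
  refine le_trans ?_ (mul_le_mul_right (J5 x.1 x.2.1 (by positivity : 0 ≤ L / 2) hs.le hε) _)
  rw [← lintegral_const_mul' _ _ ENNReal.ofReal_ne_top]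
  refine setLIntegral_mono (by fun_prop) fun y hy => ?_
  rw [← ENNReal.ofReal_mul hK, abs_of_nonneg (KK_nonneg hx (Bx_pos hy) ht)]
  exact ENNReal.ofReal_le_ofReal (hE y hy)

lemma CAtom.sup {A : G → ℝ} {L s : ℝ} (h : CAtom A L s) {x : G} (hx : 0 < x.2.2) {t : ℝ} (ht : 0 < t) :
    |convPoisson A t x| ≤ 1 / (2 * s * L ^ 2) := by
  have hL := h.hL
  have hs := h.hs
  have hB : 0 ≤ 1 / (2 * s * L ^ 2) := by positivity
  unfold convPoisson
  refine abs_integral_le_lint _ hB ?_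
  have hT : Measurable fun y => gMul x (gInv y) := by unfold gMul gInv; fun_prop
  have hae : ∀ᵐ y ∂ρG, |A (gMul x (gInv y))| ≤ 1 / (2 * s * L ^ 2) := by
    have h2 : ∀ᵐ z ∂(Measure.map (fun y => gMul x (gInv y)) ρG), |A z| ≤ 1 / (2 * s * L ^ 2) := by
      rw [map_T x hx]
      exact (withDensity_absolutelyContinuous _ _).ae_le h.ae
    exact ae_of_ae_map hT.aemeasurable h2
  calc _ ≤ ∫⁻ y, ENNReal.ofReal (1 / (2 * s * L ^ 2)) * ENNReal.ofReal (poissonK t y) ∂ρG := by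
        refine lintegral_mono_ae ?_
        filter_upwards [hae, ae_pos_rho] with y hy hy0
        rw [abs_mul, ENNReal.ofReal_mul (abs_nonneg _)]
        have : 0 ≤ poissonK t y := by rw [poissonK_eq hy0]; exact KK_nonneg hy0 gE_pos ht
        rw [abs_of_nonneg this]
        gcongr
    _ ≤ _ := by
        rw [lintegral_const_mul' _ _ ENNReal.ofReal_ne_top]
        exact mul_le_of_le_one_right' (poisson_lint ht)


lemma Q1_of {η : ℝ} {z : G} (h : η ≤ DD z gE) :
    Q1 η z = ENNReal.ofReal (1 / (Np z gE * Nm z gE) * (1 / DD z gE ^ 3)) := by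
  have := Np_nonneg z gE
  have := Nm_nonneg z gE
  unfold Q1; rw [if_pos h, ENNReal.ofReal_mul (by positivity)]

def Q2R (M : ℝ) (z : G) : ℝ := 1 / (Real.log z.2.2 ^ 2 + 1) * (M / Real.sqrt (z.1 ^ 2 + M ^ 2) *
    (1 / (z.2.1 ^ 2 + (z.1 ^ 2 + M ^ 2))))

lemma Q2_eq {M : ℝ} (hM : 0 ≤ M) (z : G) : Q2 M z = ENNReal.ofReal (Q2R M z) := by
  unfold Q2 Q2R
  rw [Real.sq_sqrt (by positivity), ENNReal.ofReal_mul (by positivity), ENNReal.ofReal_mul (by positivity), one_pow]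

lemma maxP_le {A : G → ℝ} {x : G} {F : ℝ≥0∞} (h : ∀ t, 0 < t → ENNReal.ofReal |convPoisson A t x| ≤ F) :
    maxPoisson A x ≤ F := iSup₂_le h

lemma NpE_le {x : G} : Np x gE ≤ Nm x gE + 2 := by
  have h1 := Np_Nm x gE
  have h2 := Nm_ge3 x gE
  have h3 := Nm_nonneg x gE
  have h4 := abs_le.1 h2
  simp only [gE] at h1 h4 h3 ⊢
  apply abs_le_of_sq_le_sq' _ (by linarith) |>.2
  nlinarith [h4.2]

lemma exp8_lt : Real.exp 8 < 2990 := by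
  have h : Real.exp 8 = Real.exp 1 ^ 8 := by rw [← Real.exp_nat_mul]; norm_num
  rw [h]
  calc Real.exp 1 ^ 8 < 2.7182818286 ^ 8 := pow_lt_pow_left₀ Real.exp_one_lt_d9 (Real.exp_pos _).le (by norm_num)
    _ < 2990 := by norm_num

lemma exp2_gt : 7 < Real.exp 2 := by
  have h : Real.exp 2 = Real.exp 1 ^ 2 := by rw [← Real.exp_nat_mul]; norm_num
  rw [h]
  have := Real.exp_one_gt_d9
  nlinarith

lemma Bx_delta {L s : ℝ} {y : G} (hs : 0 ≤ s) (hs1 : s ≤ 1) (hy : y ∈ Bx (L / 2) s) :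
    |y.1| + |y.2.1| + |y.2.2 - 1| ≤ L + 2 * s := by
  obtain ⟨a, b, c⟩ := hy
  have h1 : |y.1| ≤ L / 2 := abs_le.2 a
  have h2 : |y.2.1| ≤ L / 2 := abs_le.2 b
  have h3 : |y.2.2 - 1| ≤ 2 * s := by
    have h4 : Real.exp s ≤ 1 + 2 * s := by
      have := Real.abs_exp_sub_one_le (x := s) (by rw [abs_of_nonneg hs]; exact hs1)
      rw [abs_of_nonneg hs] at this
      linarith [(abs_le.1 this).2]
    have h5 := Real.add_one_le_exp (-s)
    rw [abs_le]; constructor <;> linarith [c.1, c.2]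
  linarith

lemma Bx_log {M s : ℝ} {y : G} (hy : y ∈ Bx M s) : |Real.log y.2.2| ≤ s := by
  have hp := Bx_pos hy
  rw [abs_le, Real.le_log_iff_exp_le hp, Real.log_le_iff_le_exp hp]; exact hy.2.2

lemma DD_quarter {x : G} (hx : 0 < x.2.2) (ha : 1 / 4 ≤ x.2.2) : DD x gE ≤ 2 * Nm x gE := by
  have h := Nm_ge_DD hx gE_pos
  have h1 := Nm_nonneg x gE
  have e : (gE : G).2.2 = 1 := rfl
  rw [e] at h
  apply abs_le_of_sq_le_sq' _ (by linarith) |>.2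
  nlinarith [sq_nonneg (DD x gE)]

lemma logE_le {x : G} (hx : 0 < x.2.2) : |Real.log x.2.2| ≤ DD x gE := by
  have := DD_ge_log hx gE_pos
  simpa [gE] using this

lemma small_Q2 {x : G} (hx : 0 < x.2.2) (ha : x.2.2 < 1 / 4) :
    1 / (Nm x gE ^ 2 * Np x gE * DD x gE ^ 2) ≤ 4 * Q2R 1 x := by
  have hl := logE_le hx
  have h1 : 1 ≤ |Real.log x.2.2| := by
    have : Real.log x.2.2 ≤ -1 := by
      rw [Real.log_le_iff_le_exp hx]
      have h2 : Real.exp (-1) = (Real.exp 1)⁻¹ := Real.exp_neg 1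
      have h3 := Real.exp_one_lt_d9
      rw [h2]
      have : (1:ℝ)/4 ≤ (Real.exp 1)⁻¹ := by
        rw [one_div]; apply inv_anti₀ (Real.exp_pos _); linarith
      linarith
    rw [abs_of_nonpos (by linarith)]; linarith
  have hD : (Real.log x.2.2 ^ 2 + 1) / 2 ≤ DD x gE ^ 2 := by
    have h2 : |Real.log x.2.2| ^ 2 ≤ DD x gE ^ 2 := pow_le_pow_left₀ (abs_nonneg _) hl 2
    rw [← sq_abs (Real.log x.2.2)]
    nlinarith
  have hN : 9 / 16 * (x.2.1 ^ 2 + (x.1 ^ 2 + 1 ^ 2)) ≤ Nm x gE ^ 2 := by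
    rw [Nm_sq]; simp only [gE]; nlinarith [sq_nonneg x.1, sq_nonneg x.2.1]
  have hP : Real.sqrt (x.1 ^ 2 + 1 ^ 2) ≤ Np x gE := by
    unfold Np; apply Real.sqrt_le_sqrt; simp only [gE]; nlinarith [sq_nonneg x.2.1]
  have hS : 0 < Real.sqrt (x.1 ^ 2 + 1 ^ 2) := Real.sqrt_pos.2 (by positivity)
  unfold Q2R
  calc _ ≤ 1 / (9 / 16 * (x.2.1 ^ 2 + (x.1 ^ 2 + 1 ^ 2)) * Real.sqrt (x.1 ^ 2 + 1 ^ 2) * ((Real.log x.2.2 ^ 2 + 1) / 2)) := by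
        gcongr
        exact mul_nonneg (sq_nonneg _) (Np_nonneg _ _)
    _ = 32 / 9 * (1 / (Real.log x.2.2 ^ 2 + 1) * (1 / Real.sqrt (x.1 ^ 2 + 1 ^ 2) *
          (1 / (x.2.1 ^ 2 + (x.1 ^ 2 + 1 ^ 2))))) := by
        field_simp; norm_num
    _ ≤ _ := by
        gcongr; norm_num

lemma Q2R_nonneg {M : ℝ} (hM : 0 ≤ M) (z : G) : 0 ≤ Q2R M z := by unfold Q2R; positivity

lemma case1_far {A : G → ℝ} {L s : ℝ} (h : CAtom A L s) (hs6 : s < 1 / 10 ^ 6) {x : G} (hx : 0 < x.2.2)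
    (hN : 2 * 10 ^ 5 * s ≤ Nm x gE) {t : ℝ} (ht : 0 < t) :
    s ≤ DD x gE ∧ |convPoisson A t x| ≤
      10 ^ 7 * s * (1 / (Np x gE * Nm x gE) * (1 / DD x gE ^ 3)) + 10 ^ 5 * s * Q2R 1 x := by
  have hL := h.hL
  have hs := h.hs
  obtain ⟨hL1, hL2⟩ := h.h1 (by linarith)
  have he8 := exp8_lt
  have hL3 : L ≤ 2990 * s := by nlinarith
  have hP1 : 1 ≤ Np x gE := by
    have := Np_ge hx gE_pos
    simp only [gE] at this ⊢; linarith
  have hNp : 0 < Nm x gE := by linarith [show 0 < 2 * 10 ^ 5 * s by positivity]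
  have hP2 := NpE_le (x := x)
  have hDr := DD_ge_ratio hx gE_pos
  have hD0 : 66000 * s ≤ DD x gE := by
    refine le_trans ?_ hDr
    rw [le_div_iff₀ (by linarith)]
    by_cases h1 : Nm x gE ≤ 1 <;> nlinarith
  have hDp : 0 < DD x gE := by linarith
  have h8 : 8 * (3000 * s) / Np x gE ≤ 24000 * s := by
    rw [div_le_iff₀ (by linarith)]; nlinarith
  have hQ := Q2R_nonneg zero_le_one x
  refine ⟨by linarith, ?_⟩
  refine h.cancel hx ht ?_ (by positivity)
  intro y hy
  have hk := KK_diff hx (Bx_pos hy) (Δ := 3000 * s) (V := s) ht hNp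
    ((Bx_delta hs.le (by linarith) hy).trans (by linarith)) (by linarith) (Bx_log hy) (by linarith)
  refine hk.trans ?_
  have hb : 192 * (8 * (3000 * s) / Np x gE + s) / (Nm x gE * Np x gE * DD x gE ^ 3) ≤
      5 * 10 ^ 6 * s * (1 / (Np x gE * Nm x gE) * (1 / DD x gE ^ 3)) := by
    calc _ ≤ 192 * (24000 * s + s) / (Nm x gE * Np x gE * DD x gE ^ 3) := by gcongr
      _ = 4608192 * s * (1 / (Np x gE * Nm x gE) * (1 / DD x gE ^ 3)) := by field_simp; norm_num
      _ ≤ _ := by gcongr; norm_num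
  have ha : 6 * (3000 * s) / (Nm x gE ^ 2 * Np x gE * DD x gE ^ 2) ≤
      5 * 10 ^ 6 * s * (1 / (Np x gE * Nm x gE) * (1 / DD x gE ^ 3)) + 10 ^ 5 * s * Q2R 1 x := by
    have e : 6 * (3000 * s) / (Nm x gE ^ 2 * Np x gE * DD x gE ^ 2) =
      18000 * s * (1 / (Nm x gE ^ 2 * Np x gE * DD x gE ^ 2)) := by ring
    rw [e]
    by_cases hq : 1 / 4 ≤ x.2.2
    · have h2 := DD_quarter hx hq
      have h3 : 1 / (Nm x gE ^ 2 * Np x gE * DD x gE ^ 2) ≤ 2 * (1 / (Np x gE * Nm x gE) * (1 / DD x gE ^ 3)) := by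
        calc 1 / (Nm x gE ^ 2 * Np x gE * DD x gE ^ 2) ≤ 1 / (Nm x gE * (DD x gE / 2) * Np x gE * DD x gE ^ 2) := by
              rw [sq (Nm x gE)]
              have : DD x gE / 2 ≤ Nm x gE := by linarith
              gcongr
          _ = _ := by field_simp
      have h4 : 18000 * s * (1 / (Nm x gE ^ 2 * Np x gE * DD x gE ^ 2)) ≤
        18000 * s * (2 * (1 / (Np x gE * Nm x gE) * (1 / DD x gE ^ 3))) := by gcongr
      have h5 : 0 ≤ s * (1 / (Np x gE * Nm x gE) * (1 / DD x gE ^ 3)) := by positivity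
      have h6 : 0 ≤ s * Q2R 1 x := by positivity
      nlinarith
    · have h3 := small_Q2 hx (not_le.1 hq)
      have h4 : 18000 * s * (1 / (Nm x gE ^ 2 * Np x gE * DD x gE ^ 2)) ≤ 18000 * s * (4 * Q2R 1 x) := by gcongr
      have h5 : 0 ≤ s * (1 / (Np x gE * Nm x gE) * (1 / DD x gE ^ 3)) := by positivity
      have h6 : 0 ≤ s * Q2R 1 x := by positivity
      nlinarith
  have e2 : 10 ^ 7 * s * (1 / (Np x gE * Nm x gE) * (1 / DD x gE ^ 3)) =
    5 * 10 ^ 6 * s * (1 / (Np x gE * Nm x gE) * (1 / DD x gE ^ 3)) + 5 * 10 ^ 6 * s * (1 / (Np x gE * Nm x gE) * (1 / DD x gE ^ 3)) := by ring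
  rw [e2]
  linarith

lemma case1_near {x : G} (hx : 0 < x.2.2) {w : ℝ} (hw : w ≤ 1 / 2) (hN : Nm x gE < w) : x ∈ Bx w (2 * w) := by
  have h0 := Nm_nonneg x gE
  have h1 := abs_le.1 ((Nm_ge1 x gE).trans hN.le)
  have h2 := abs_le.1 ((Nm_ge2 x gE).trans hN.le)
  have h3 := abs_le.1 ((Nm_ge3 x gE).trans hN.le)
  simp only [gE, sub_zero] at h1 h2 h3
  have hw0 : 0 < w := by linarith
  refine ⟨h1, h2, ?_, ?_⟩
  · have h4 : Real.exp (-(2 * w)) ≤ 1 - w := by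
      rw [Real.exp_neg]
      have h5 := Real.add_one_le_exp (2 * w)
      calc (Real.exp (2 * w))⁻¹ ≤ (2 * w + 1)⁻¹ := inv_anti₀ (by linarith) h5
        _ ≤ 1 - w := by
          rw [inv_eq_one_div, div_le_iff₀ (by linarith)]; nlinarith
    linarith [h3.1]
  · have h5 := Real.add_one_le_exp (2 * w)
    linarith [h3.2]

def Maj (C : ℝ) (A : G → ℝ) : Prop :=
  ∃ F : G → ℝ≥0∞, Measurable F ∧ (∀ x, 0 < x.2.2 → maxPoisson A x ≤ F x) ∧ ∫⁻ x, F x ∂ρG ≤ ENNReal.ofReal C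

lemma case1 : ∃ C : ℝ, ∀ A L s, CAtom A L s → s < 1 / 10 ^ 6 → Maj C A := by
  refine ⟨16 * (2 * 10 ^ 5) ^ 3 + 10 ^ 7 * Real.pi ^ 2 + 10 ^ 5 * Real.pi ^ 3, fun A L s h hs6 => ?_⟩
  have hL := h.hL
  have hs := h.hs
  have hpi := Real.pi_pos
  set w := 2 * 10 ^ 5 * s with hw
  have hw0 : 0 < w := by positivity
  have hmi : Measurable ((Bx w (2 * w)).indicator (1 : G → ℝ≥0∞)) := measurable_one.indicator (Bx_meas _ _)
  have hm1 := measurable_Q1 s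
  have hm2 := measurable_Q2 1
  refine ⟨fun x => ENNReal.ofReal (1 / s ^ 3) * (Bx w (2 * w)).indicator (1 : G → ℝ≥0∞) x +
    (ENNReal.ofReal (10 ^ 7 * s) * Q1 s x + ENNReal.ofReal (10 ^ 5 * s) * Q2 1 x), by fun_prop, ?_, ?_⟩
  · intro x hx
    refine maxP_le fun t ht => ?_
    by_cases hN : Nm x gE < w
    · have h1 := case1_near hx (by rw [hw]; linarith) hN
      refine le_add_right ?_
      rw [indicator_of_mem h1, Pi.one_apply, mul_one]
      apply ENNReal.ofReal_le_ofReal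
      refine (h.sup hx ht).trans ?_
      obtain ⟨hL1, hL2⟩ := h.h1 (by linarith)
      have := exp2_gt
      apply one_div_le_one_div_of_le (by positivity)
      have hsL : s ≤ L := by nlinarith
      have : s ^ 2 ≤ L ^ 2 := pow_le_pow_left₀ hs.le hsL 2
      nlinarith
    · obtain ⟨h1, h2⟩ := case1_far h hs6 hx (not_lt.1 hN) ht
      have := Np_nonneg x gE
      have := Nm_nonneg x gE
      have hD : 0 < DD x gE := by linarith
      refine le_add_left ?_
      rw [Q1_of h1, Q2_eq zero_le_one, ← ENNReal.ofReal_mul (by positivity), ← ENNReal.ofReal_mul (by positivity),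
        ← ENNReal.ofReal_add (by positivity) (mul_nonneg (by positivity) (Q2R_nonneg zero_le_one x))]
      exact ENNReal.ofReal_le_ofReal h2
  · rw [lintegral_add_left (by fun_prop), lintegral_add_left (by fun_prop), lintegral_const_mul _ hmi,
      lintegral_const_mul _ hm1, lintegral_const_mul _ hm2, lintegral_indicator_one (Bx_meas _ _), rho_Bx _ _ hw0.le,
      Q2_lint one_pos, add_assoc, ENNReal.ofReal_add (by positivity) (by positivity),
      ENNReal.ofReal_add (by positivity) (by positivity)]
    refine add_le_add ?_ (add_le_add ?_ ?_)
    · rw [← ENNReal.ofReal_mul (by positivity)]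
      apply ENNReal.ofReal_le_ofReal
      rw [hw]; apply le_of_eq; field_simp; norm_num
    · refine (mul_le_mul_right (Q1_lint hs) _).trans ?_
      rw [← ENNReal.ofReal_mul (by positivity)]
      apply ENNReal.ofReal_le_ofReal
      apply le_of_eq; field_simp
    · rw [← ENNReal.ofReal_mul (by positivity)]
      apply ENNReal.ofReal_le_ofReal
      have : 0 ≤ Real.pi ^ 3 := by positivity
      nlinarith


lemma CAtom.big {A : G → ℝ} {L s : ℝ} (h : CAtom A L s) (hs6 : 1 / 10 ^ 6 ≤ s) :
    Real.exp (2 * s) ≤ 10 ^ 6 * L ∧ L ≤ Real.exp 8 * Real.exp (8 * s) := by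
  have hL := h.hL
  have hs := h.hs
  by_cases h1 : s < 1
  · obtain ⟨a, b⟩ := h.h1 h1
    have h2 : Real.exp (2 * s) ≤ Real.exp 2 := Real.exp_le_exp.2 (by linarith)
    have h3 : s ≤ Real.exp (8 * s) := by linarith [Real.add_one_le_exp (8 * s)]
    have h4 := Real.exp_pos 2
    have h5 := Real.exp_pos 8
    constructor
    · nlinarith
    · nlinarith
  · obtain ⟨a, b⟩ := h.h2 (not_lt.1 h1)
    have h5 := Real.add_one_le_exp (8 : ℝ)
    have h6 := Real.exp_pos (8 * s)
    constructor
    · linarith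
    · nlinarith

lemma Bx_delta2 {L s : ℝ} {y : G} (hs : 0 ≤ s) (hy : y ∈ Bx (L / 2) s) :
    |y.1| + |y.2.1| + |y.2.2 - 1| ≤ L + Real.exp (2 * s) := by
  obtain ⟨a, b, c⟩ := hy
  have h1 : |y.1| ≤ L / 2 := abs_le.2 a
  have h2 : |y.2.1| ≤ L / 2 := abs_le.2 b
  have h3 : |y.2.2 - 1| ≤ Real.exp (2 * s) := by
    have h4 : Real.exp s ≤ Real.exp (2 * s) := Real.exp_le_exp.2 (by linarith)
    have h5 := Real.add_one_le_exp (2 * s)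
    have h6 := Real.exp_pos (-s)
    rw [abs_le]; constructor <;> linarith [c.1, c.2]
  linarith

lemma exp4_lt : Real.exp 4 < 100 := by
  have h : Real.exp 4 = Real.exp 1 ^ 4 := by rw [← Real.exp_nat_mul]; norm_num
  rw [h]
  calc Real.exp 1 ^ 4 < 2.7182818286 ^ 4 := pow_lt_pow_left₀ Real.exp_one_lt_d9 (Real.exp_pos _).le (by norm_num)
    _ < 100 := by norm_num

lemma exp32_gt : 10 ^ 10 < Real.exp 32 := by
  have h : Real.exp 32 = Real.exp 1 ^ 32 := by rw [← Real.exp_nat_mul]; norm_num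
  rw [h]
  calc (10 : ℝ) ^ 10 < 2.7182818283 ^ 32 := by norm_num
    _ < Real.exp 1 ^ 32 := pow_lt_pow_left₀ Real.exp_one_gt_d9 (by norm_num) (by norm_num)

lemma case2_far {A : G → ℝ} {L s : ℝ} (h : CAtom A L s) (hs6 : 1 / 10 ^ 6 ≤ s) {x : G} (hx : 0 < x.2.2)
    (hN : (10 ^ 8 * L) ^ 2 ≤ x.1 ^ 2 + x.2.1 ^ 2) {t : ℝ} (ht : 0 < t) :
    s ≤ DD x gE ∧ |convPoisson A t x| ≤
      10 ^ 8 * s * (1 / (Np x gE * Nm x gE) * (1 / DD x gE ^ 3)) + 10 ^ 8 * Q2R L x := by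
  have hL := h.hL
  have hs := h.hs
  obtain ⟨hL1, hL2⟩ := h.big hs6
  have hNsq : x.1 ^ 2 + x.2.1 ^ 2 ≤ Nm x gE ^ 2 := by
    rw [Nm_sq]; simp only [gE, sub_zero]; nlinarith [sq_nonneg (x.2.2 - 1)]
  have hN1 : 10 ^ 8 * L ≤ Nm x gE :=
    (abs_le_of_sq_le_sq' (hN.trans hNsq) (Nm_nonneg _ _)).2
  have hNP := Nm_lt_Np hx gE_pos
  have hN0 : 0 < Nm x gE := by linarith
  have hP0 : 0 < Np x gE := by linarith
  have hexp := DD_ge_m hx gE_pos (10 ^ 8 * L) (by positivity) (by simpa [gE] using hN)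
  have hD4 : 4 + 2 * s ≤ DD x gE := by
    rw [← Real.exp_le_exp, Real.exp_add]
    refine le_trans ?_ hexp
    have := exp4_lt
    have h1 := Real.exp_pos (2 * s)
    have e : (gE : G).2.2 = 1 := rfl
    rw [e, div_one]
    nlinarith
  have hD0 : 0 < DD x gE := by linarith
  have h8 : 8 * (2 * 10 ^ 6 * L) / Np x gE ≤ 0.16 := by
    rw [div_le_iff₀ hP0]; nlinarith
  have hQ := Q2R_nonneg hL.le x
  refine ⟨by linarith, ?_⟩
  refine h.cancel hx ht ?_ (by positivity)
  intro y hy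
  have hk := KK_diff hx (Bx_pos hy) (Δ := 2 * 10 ^ 6 * L) (V := s) ht hN0
    ((Bx_delta2 hs.le hy).trans (by linarith)) (by linarith) (Bx_log hy) (by linarith)
  refine hk.trans ?_
  rw [add_comm]
  refine add_le_add ?_ ?_
  · have h9 : 8 * (2 * 10 ^ 6 * L) / Np x gE + s ≤ 200000 * s := by linarith
    calc _ ≤ 192 * (200000 * s) / (Nm x gE * Np x gE * DD x gE ^ 3) := by gcongr
      _ = 38400000 * s * (1 / (Np x gE * Nm x gE) * (1 / DD x gE ^ 3)) := by field_simp; norm_num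
      _ ≤ _ := by gcongr; norm_num
  · have hD : (Real.log x.2.2 ^ 2 + 1) / 2 ≤ DD x gE ^ 2 := by
      have h2 : |Real.log x.2.2| ^ 2 ≤ DD x gE ^ 2 := pow_le_pow_left₀ (abs_nonneg _) (logE_le hx) 2
      rw [← sq_abs (Real.log x.2.2)]
      nlinarith
    have hLL : L ^ 2 ≤ x.1 ^ 2 + x.2.1 ^ 2 := by nlinarith [sq_nonneg L]
    have hN2 : (x.2.1 ^ 2 + (x.1 ^ 2 + L ^ 2)) / 2 ≤ Nm x gE ^ 2 := by linarith
    have hS : 0 < Real.sqrt (x.1 ^ 2 + L ^ 2) := Real.sqrt_pos.2 (by positivity)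
    have hP : Real.sqrt (x.1 ^ 2 + L ^ 2) / 2 ≤ Np x gE := by
      apply (abs_le_of_sq_le_sq' _ hP0.le).2
      rw [div_pow, Real.sq_sqrt (by positivity)]
      have : Nm x gE ^ 2 ≤ Np x gE ^ 2 := pow_le_pow_left₀ hN0.le hNP.le 2
      nlinarith [sq_nonneg x.2.1, sq_nonneg x.1]
    unfold Q2R
    calc _ ≤ 6 * (2 * 10 ^ 6 * L) / ((x.2.1 ^ 2 + (x.1 ^ 2 + L ^ 2)) / 2 * (Real.sqrt (x.1 ^ 2 + L ^ 2) / 2) *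
          ((Real.log x.2.2 ^ 2 + 1) / 2)) := by gcongr
      _ = 96 * 10 ^ 6 * (1 / (Real.log x.2.2 ^ 2 + 1) * (L / Real.sqrt (x.1 ^ 2 + L ^ 2) *
          (1 / (x.2.1 ^ 2 + (x.1 ^ 2 + L ^ 2))))) := by
        field_simp; norm_num
      _ ≤ _ := by gcongr; norm_num

lemma Nm_ge_cNp {x y : G} (hx : 0 < x.2.2) (hy : 0 < y.2.2) (hD : 1 / 10 ^ 6 ≤ DD x y) :
    Np x y ≤ 3 * 10 ^ 6 * Nm x y := by
  have hNP := Nm_lt_Np hx hy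
  have h0 := Nm_nonneg x y
  have h1 := exp_DD hx hy
  have h2 := Np_Nm x y
  have h3 := Real.add_one_le_exp (DD x y)
  rw [← h2] at h1
  have h4 : (Np x y + Nm x y) ^ 2 / (Np x y ^ 2 - Nm x y ^ 2) = (Np x y + Nm x y) / (Np x y - Nm x y) := by
    have a : Np x y - Nm x y ≠ 0 := by linarith
    have b : Np x y + Nm x y ≠ 0 := by linarith
    have c : Np x y ^ 2 - Nm x y ^ 2 = (Np x y + Nm x y) * (Np x y - Nm x y) := by ring
    rw [c]; field_simp
  rw [h4] at h1
  have h5 : 1 + 1 / 10 ^ 6 ≤ (Np x y + Nm x y) / (Np x y - Nm x y) := by rw [← h1]; linarith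
  rw [le_div_iff₀ (by linarith)] at h5
  linarith

lemma arsinh_bd {z s : ℝ} (hs6 : 1 / 10 ^ 6 ≤ s) (hz : z ≤ 2 * 10 ^ 8 * (Real.exp 8 * Real.exp (8 * s)) * Real.exp s) :
    Real.arsinh z ≤ 10 ^ 8 * s := by
  have h1 : z ≤ Real.sinh (40 + 9 * s) := by
    rw [Real.sinh_eq]
    have e : Real.exp (40 + 9 * s) = Real.exp 32 * (Real.exp 8 * Real.exp (8 * s) * Real.exp s) := by
      rw [← Real.exp_add, ← Real.exp_add, ← Real.exp_add]; congr 1; ring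
    have h2 : Real.exp (-(40 + 9 * s)) ≤ 1 := Real.exp_le_one_iff.2 (by linarith)
    have h3 : 1 ≤ Real.exp 8 * Real.exp (8 * s) * Real.exp s := by
      rw [← Real.exp_add, ← Real.exp_add]; exact Real.one_le_exp (by linarith)
    have h4 := exp32_gt
    rw [e]
    nlinarith
  calc Real.arsinh z ≤ Real.arsinh (Real.sinh (40 + 9 * s)) := Real.arsinh_le_arsinh.2 h1
    _ = 40 + 9 * s := Real.arsinh_sinh _
    _ ≤ _ := by linarith

lemma case2_near {A : G → ℝ} {L s : ℝ} (h : CAtom A L s) (hs6 : 1 / 10 ^ 6 ≤ s) {x : G} (hx : 0 < x.2.2)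
    (hN : |x.1| ≤ 10 ^ 8 * L) {t : ℝ} (ht : 0 < t) :
    |convPoisson A t x| ≤ 10 ^ 17 * s / L ^ 2 * (1 / (Real.log x.2.2 ^ 2 + s ^ 2)) := by
  have hL := h.hL
  have hs := h.hs
  obtain ⟨hL1, hL2⟩ := h.big hs6
  set u := Real.log x.2.2 with hu
  by_cases h1 : |u| ≤ 2 * s
  · refine (h.sup hx ht).trans ?_
    have h2 : u ^ 2 ≤ 4 * s ^ 2 := by
      rw [← sq_abs]; nlinarith [abs_nonneg u]
    calc 1 / (2 * s * L ^ 2) = 10 * s / L ^ 2 * (1 / (20 * s ^ 2)) := by field_simp; norm_num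
      _ ≤ _ := by
        gcongr
        · norm_num
        · nlinarith
  · have h1' := not_le.1 h1
    have hu0 : 0 < |u| := by linarith
    have hu2 : 0 < u ^ 2 := by rw [← sq_abs]; positivity
    have hd := h.direct hx ht (K := 12 * 10 ^ 6 / u ^ 2) (ε := Real.exp (-s)) (by positivity) (Real.exp_pos _) ?_
    · refine hd.trans ?_
      have h2 : Real.arsinh ((|x.1| + L / 2) / Real.exp (-s)) ≤ 10 ^ 8 * s := by
        apply arsinh_bd hs6
        rw [Real.exp_neg, div_inv_eq_mul]
        have := Real.exp_pos s
        gcongr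
        linarith
      have h2' : 0 ≤ Real.arsinh ((|x.1| + L / 2) / Real.exp (-s)) := Real.arsinh_nonneg_iff.2 (by positivity)
      have hpi := Real.pi_lt_four
      have hpi0 := Real.pi_pos
      have h4 : 4 * s ^ 2 ≤ u ^ 2 := by
        rw [← sq_abs u]; nlinarith
      calc _ ≤ 1 / (2 * s * L ^ 2) * (12 * 10 ^ 6 / u ^ 2 * (2 * s * (4 * (2 * (10 ^ 8 * s))))) := by gcongr
        _ = 96 * 10 ^ 14 * s / L ^ 2 * (1 / u ^ 2) := by field_simp; norm_num
        _ ≤ 96 * 10 ^ 14 * s / L ^ 2 * (1 / ((u ^ 2 + s ^ 2) / 2)) := by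
          gcongr; nlinarith
        _ = 192 * 10 ^ 14 * s / L ^ 2 * (1 / (u ^ 2 + s ^ 2)) := by field_simp; norm_num
        _ ≤ _ := by gcongr; norm_num
    · intro y hy
      have hy0 := Bx_pos hy
      have hlog := DD_ge_log hx hy0
      have hv := Bx_log hy
      have hD : |u| / 2 ≤ DD x y := by
        have := abs_sub_abs_le_abs_sub u (Real.log y.2.2)
        linarith
      have hDp : 0 < DD x y := by linarith
      have hNp : 0 < Nm x y := (Nm_nonneg x y).lt_of_ne' ((DD_ne_zero hx hy0).1 hDp.ne')
      have hP0 := Np_pos hx hy0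
      have hc := Nm_ge_cNp hx hy0 (by linarith)
      refine (KK_le hx hy0 hNp ht).trans ?_
      have hNc : Np x y / (3 * 10 ^ 6) ≤ Nm x y := by
        rw [div_le_iff₀ (by norm_num)]; linarith
      have hPP : (x.1 - y.1) ^ 2 + (x.2.1 - y.2.1) ^ 2 + Real.exp (-s) ^ 2 ≤ Np x y ^ 2 := by
        rw [Np_sq]
        have := hy.2.2.1
        have := Real.exp_pos (-s)
        gcongr
        linarith
      have hp2 : 0 < (x.1 - y.1) ^ 2 + (x.2.1 - y.2.1) ^ 2 + Real.exp (-s) ^ 2 := by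
        have := Real.exp_pos (-s)
        positivity
      calc _ ≤ 1 / (Np x y * (Np x y / (3 * 10 ^ 6))) * (1 / (|u| / 2) ^ 2) := by gcongr
        _ = 12 * 10 ^ 6 / u ^ 2 * (1 / Np x y ^ 2) := by
          rw [div_pow, sq_abs]; field_simp; norm_num
        _ ≤ _ := by gcongr

lemma case2 : ∃ C : ℝ, ∀ A L s, CAtom A L s → 1 / 10 ^ 6 ≤ s → Maj C A := by
  refine ⟨10 ^ 17 * (2 * 10 ^ 8) ^ 2 * Real.pi + 10 ^ 8 * Real.pi ^ 2 + 10 ^ 8 * Real.pi ^ 3, fun A L s h hs6 => ?_⟩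
  have hL := h.hL
  have hs := h.hs
  have hpi := Real.pi_pos
  have hm1 := measurable_Q1 s
  have hm2 := measurable_Q2 L
  have hm3 := measurable_Q3 (10 ^ 8 * L) s
  refine ⟨fun x => ENNReal.ofReal (10 ^ 17 * s / L ^ 2) * Q3 (10 ^ 8 * L) s x +
    (ENNReal.ofReal (10 ^ 8 * s) * Q1 s x + ENNReal.ofReal (10 ^ 8) * Q2 L x), by fun_prop, ?_, ?_⟩
  · intro x hx
    refine maxP_le fun t ht => ?_
    by_cases hN : |x.1| ≤ 10 ^ 8 * L ∧ |x.2.1| ≤ 10 ^ 8 * L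
    · refine le_add_right ?_
      have h1 := case2_near h hs6 hx hN.1 ht
      unfold Q3
      rw [indicator_of_mem (show x.1 ∈ Icc (-(10 ^ 8 * L)) (10 ^ 8 * L) from abs_le.1 hN.1),
        indicator_of_mem (show x.2.1 ∈ Icc (-(10 ^ 8 * L)) (10 ^ 8 * L) from abs_le.1 hN.2), Pi.one_apply, Pi.one_apply,
        one_mul, one_mul, ← ENNReal.ofReal_mul (by positivity)]
      exact ENNReal.ofReal_le_ofReal h1
    · have hN' : (10 ^ 8 * L) ^ 2 ≤ x.1 ^ 2 + x.2.1 ^ 2 := by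
        have hp : 0 ≤ 10 ^ 8 * L := by positivity
        rw [not_and_or, not_le, not_le] at hN
        rcases hN with h1 | h1
        · have := pow_le_pow_left₀ hp h1.le 2
          rw [sq_abs] at this
          nlinarith [sq_nonneg x.2.1]
        · have := pow_le_pow_left₀ hp h1.le 2
          rw [sq_abs] at this
          nlinarith [sq_nonneg x.1]
      obtain ⟨h1, h2⟩ := case2_far h hs6 hx hN' ht
      have := Np_nonneg x gE
      have := Nm_nonneg x gE
      have hD : 0 < DD x gE := by linarith
      refine le_add_left ?_
      rw [Q1_of h1, Q2_eq hL.le, ← ENNReal.ofReal_mul (by positivity), ← ENNReal.ofReal_mul (by positivity),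
        ← ENNReal.ofReal_add (by positivity) (mul_nonneg (by positivity) (Q2R_nonneg hL.le x))]
      exact ENNReal.ofReal_le_ofReal h2
  · rw [lintegral_add_left (by fun_prop), lintegral_add_left (by fun_prop), lintegral_const_mul _ hm3,
      lintegral_const_mul _ hm1, lintegral_const_mul _ hm2, Q3_lint (by positivity) hs,
      Q2_lint hL, add_assoc, ENNReal.ofReal_add (by positivity) (by positivity),
      ENNReal.ofReal_add (by positivity) (by positivity)]
    refine add_le_add ?_ (add_le_add ?_ ?_)
    · rw [← ENNReal.ofReal_mul (by positivity)]
      apply ENNReal.ofReal_le_ofReal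
      apply le_of_eq; field_simp
    · refine (mul_le_mul_right (Q1_lint hs) _).trans ?_
      rw [← ENNReal.ofReal_mul (by positivity)]
      apply ENNReal.ofReal_le_ofReal
      apply le_of_eq; field_simp
    · rw [← ENNReal.ofReal_mul (by positivity)]

lemma centered : ∃ C : ℝ, 0 < C ∧ ∀ A L s, CAtom A L s → Maj C A := by
  obtain ⟨C1, h1⟩ := case1
  obtain ⟨C2, h2⟩ := case2
  refine ⟨max (max C1 C2) 1, by positivity, fun A L s h => ?_⟩
  by_cases hs : s < 1 / 10 ^ 6
  · obtain ⟨F, a, b, c⟩ := h1 A L s h hs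
    exact ⟨F, a, b, c.trans (ENNReal.ofReal_le_ofReal (by simp))⟩
  · obtain ⟨F, a, b, c⟩ := h2 A L s h (not_lt.1 hs)
    exact ⟨F, a, b, c.trans (ENNReal.ofReal_le_ofReal (by simp))⟩


lemma gMul_assoc (c x y : G) : gMul (gMul c x) y = gMul c (gMul x y) := by
  simp only [gMul]; refine Prod.ext ?_ (Prod.ext ?_ ?_) <;> simp only <;> ring

lemma gMul_inv (c x : G) (hc : 0 < c.2.2) : gMul c (gMul (gInv c) x) = x := by
  have := hc.ne'
  simp only [gMul, gInv]; refine Prod.ext ?_ (Prod.ext ?_ ?_) <;> simp only <;> field_simp <;> ring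

lemma measurable_gMul (c : G) : Measurable (gMul c) := by unfold gMul; fun_prop

lemma mem_box {c : G} (hc : 0 < c.2.2) {L r : ℝ} (x : G) :
    gMul c x ∈ Set.Icc (c.1 - L/2) (c.1 + L/2) ×ˢ
        (Set.Icc (c.2.1 - L/2) (c.2.1 + L/2) ×ˢ
         Set.Icc (c.2.2 * Real.exp (-r)) (c.2.2 * Real.exp r)) ↔ x ∈ Bx (L / c.2.2 / 2) r := by
  have e : L / 2 = c.2.2 * (L / c.2.2 / 2) := by field_simp
  simp only [gMul, Bx, mem_prod, mem_Icc]
  rw [e, sub_eq_add_neg, sub_eq_add_neg, ← mul_neg]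
  simp only [add_le_add_iff_left, mul_le_mul_iff_right₀ hc]

lemma atom_translate {A : G → ℝ} (h : IsAtomG A) : ∃ c : G, 0 < c.2.2 ∧ ∃ L s,
    CAtom (fun x => c.2.2 ^ 2 * A (gMul c x)) L s := by
  obtain ⟨hi, R, ⟨c, L, r, hc, hL, hr, hR, h1, h2⟩, hsupp, hbd, hmean⟩ := h
  have hmR : MeasurableSet R := by
    rw [hR]; exact measurableSet_Icc.prod (measurableSet_Icc.prod measurableSet_Icc)
  have hT := measurable_gMul c
  have hmap : Measure.map (gMul c) ρG = ENNReal.ofReal (deltaG c) • ρG := map_left c hc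
  have hδ : 0 < deltaG c := by unfold deltaG; positivity
  have hpre : Bx (L / c.2.2 / 2) r = gMul c ⁻¹' R := by
    ext x; rw [mem_preimage, hR, mem_box hc]
  have hasm : AEStronglyMeasurable A (Measure.map (gMul c) ρG) := by
    rw [hmap]; exact (hi.smul_measure ENNReal.ofReal_ne_top).aestronglyMeasurable
  refine ⟨c, hc, L / c.2.2, r, ?_, ?_, ?_, ?_, by positivity, hr, ?_, ?_⟩
  · have h3 : Integrable A (Measure.map (gMul c) ρG) := by
      rw [hmap]; exact hi.smul_measure ENNReal.ofReal_ne_top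
    exact (h3.comp_measurable hT).const_mul _
  · intro x hx
    rw [hpre] at hx
    rw [hsupp _ hx, mul_zero]
  · have h4 : ρG (Bx (L / c.2.2 / 2) r) = ENNReal.ofReal (deltaG c) * ρG R := by
      rw [hpre, ← Measure.map_apply hT hmR, hmap]; simp
    have h5 : eLpNorm (A ∘ gMul c) ⊤ ρG ≤ eLpNorm A ⊤ ρG := by
      rw [← eLpNorm_map_measure hasm hT.aemeasurable]
      rw [hmap, eLpNorm_exponent_top, eLpNorm_exponent_top]
      exact eLpNormEssSup_mono_measure A Measure.smul_absolutelyContinuous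
    have h6 : eLpNorm (fun x => c.2.2 ^ 2 * A (gMul c x)) ⊤ ρG ≤ ENNReal.ofReal (c.2.2 ^ 2) * eLpNorm (A ∘ gMul c) ⊤ ρG := by
      have := eLpNorm_const_smul (c := c.2.2 ^ 2) (f := A ∘ gMul c) (p := ⊤) (μ := ρG)
      rw [Real.enorm_eq_ofReal (by positivity)] at this
      exact le_of_eq this
    refine h6.trans ?_
    rw [h4, ENNReal.mul_inv (Or.inl (by simpa using hδ)) (Or.inl ENNReal.ofReal_ne_top), ← ENNReal.ofReal_inv_of_pos hδ]
    have e : (deltaG c)⁻¹ = c.2.2 ^ 2 := by unfold deltaG; rw [inv_inv]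
    rw [e]
    gcongr
    exact h5.trans hbd
  · rw [integral_const_mul, ← integral_map hT.aemeasurable hasm, hmap, integral_smul_measure, hmean]; simp
  · intro hr1
    obtain ⟨a, b⟩ := h1 hr1
    rw [le_div_iff₀ hc, div_lt_iff₀ hc]
    constructor <;> linarith
  · intro hr1
    obtain ⟨a, b⟩ := h2 hr1
    rw [le_div_iff₀ hc, div_lt_iff₀ hc]
    constructor <;> linarith

lemma atom_maj : ∃ C : ℝ, 0 < C ∧ ∀ A, IsAtomG A → Maj C A := by
  obtain ⟨C, hC, hall⟩ := centered
  refine ⟨C, hC, fun A hA => ?_⟩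
  obtain ⟨c, hc, L, s, hat⟩ := atom_translate hA
  obtain ⟨F, hF, hle, hint⟩ := hall _ _ _ hat
  have hci : 0 < (gInv c).2.2 := by unfold gInv; positivity
  refine ⟨fun x => ENNReal.ofReal ((c.2.2 ^ 2)⁻¹) * F (gMul (gInv c) x),
    (hF.comp (measurable_gMul _)).const_mul _, ?_, ?_⟩
  · intro x hx
    have hx' : 0 < (gMul (gInv c) x).2.2 := mul_pos hci hx
    refine le_trans ?_ (mul_le_mul_right (hle _ hx') _)
    refine maxP_le fun t ht => ?_
    have h1 : ENNReal.ofReal |convPoisson (fun x => c.2.2 ^ 2 * A (gMul c x)) t (gMul (gInv c) x)| ≤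
      maxPoisson (fun x => c.2.2 ^ 2 * A (gMul c x)) (gMul (gInv c) x) := by
      unfold maxPoisson
      exact le_iSup₂ (f := fun (t : ℝ) (_ : 0 < t) => ENNReal.ofReal |convPoisson (fun x => c.2.2 ^ 2 * A (gMul c x)) t (gMul (gInv c) x)|) t ht
    refine le_trans ?_ (mul_le_mul_right h1 _)
    rw [← ENNReal.ofReal_mul (by positivity)]
    apply le_of_eq; congr 1
    have e : convPoisson (fun x => c.2.2 ^ 2 * A (gMul c x)) t (gMul (gInv c) x) = c.2.2 ^ 2 * convPoisson A t x := by
      unfold convPoisson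
      have hy : ∀ y, gMul c (gMul (gMul (gInv c) x) (gInv y)) = gMul x (gInv y) := fun y => by
        rw [← gMul_assoc c, gMul_inv c x hc]
      simp_rw [hy, mul_assoc]
      rw [integral_const_mul]
    rw [e, abs_mul, abs_of_nonneg (by positivity : (0:ℝ) ≤ c.2.2 ^ 2)]
    field_simp
  · simp only []
    rw [lintegral_const_mul' _ _ ENNReal.ofReal_ne_top, lint_left _ hci _ hF, ← mul_assoc,
      ← ENNReal.ofReal_mul (by positivity)]
    have e : (c.2.2 ^ 2)⁻¹ * deltaG (gInv c) = 1 := by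
      unfold deltaG gInv; field_simp
    rw [e, ENNReal.ofReal_one, one_mul]; exact hint


lemma conv_le_tsum {f : G → ℝ} (hf : Integrable f ρG) {lam : ℕ → ℝ} {A : ℕ → G → ℝ} (h : IsH1Decomp f lam A)
    {F : ℕ → G → ℝ≥0∞} {x : G} (hx : 0 < x.2.2) (hF : ∀ j, maxPoisson (A j) x ≤ F j x) :
    maxPoisson f x ≤ ∑' j, ENNReal.ofReal |lam j| * F j x := by
  obtain ⟨hA, hsum, hlim⟩ := h
  refine maxP_le fun t ht => ?_
  obtain ⟨C, hC⟩ := KK_bdd hx ht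
  set S := ∑' j, ENNReal.ofReal |lam j| * F j x with hS
  have hAj : ∀ j, Integrable (A j) ρG := fun j => (hA j).1
  have key : ∀ N : ℕ, ENNReal.ofReal |convPoisson f t x| ≤
      ENNReal.ofReal C * eLpNorm (fun x => f x - ∑ j ∈ Finset.range N, lam j * A j x) 1 ρG + S := by
    intro N
    have hiS : Integrable (fun z => ∑ j ∈ Finset.range N, lam j * A j z) ρG :=
      integrable_finsetSum _ fun j _ => (hAj j).const_mul _
    have e1 : convPoisson f t x = (∫ z, (f z - ∑ j ∈ Finset.range N, lam j * A j z) * KK t x z ∂ρG) +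
        ∑ j ∈ Finset.range N, lam j * convPoisson (A j) t x := by
      have e2 : ∑ j ∈ Finset.range N, lam j * convPoisson (A j) t x =
          ∫ z, (∑ j ∈ Finset.range N, lam j * A j z) * KK t x z ∂ρG := by
        simp_rw [Finset.sum_mul]
        rw [integral_finsetSum _ fun j _ => integrable_KK ((hAj j).const_mul (lam j)) hx ht]
        refine Finset.sum_congr rfl fun j _ => ?_
        rw [convPoisson_eq (hAj j).aestronglyMeasurable hx, ← integral_const_mul]
        simp_rw [mul_assoc]
      have hfS : Integrable (fun z => (f z - ∑ j ∈ Finset.range N, lam j * A j z) * KK t x z) ρG :=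
        integrable_KK (hf.sub hiS) hx ht
      rw [e2, ← integral_add hfS (integrable_KK hiS hx ht),
        convPoisson_eq hf.aestronglyMeasurable hx]
      refine integral_congr_ae (Eventually.of_forall fun z => ?_)
      simp only; ring
    rw [e1]
    refine (ENNReal.ofReal_le_ofReal (abs_add_le _ _)).trans ?_
    rw [ENNReal.ofReal_add (abs_nonneg _) (abs_nonneg _)]
    refine add_le_add ?_ ?_
    · rw [← Real.enorm_eq_ofReal_abs]
      refine (enorm_integral_le_lintegral_enorm _).trans ?_
      rw [eLpNorm_one_eq_lintegral_enorm, ← lintegral_const_mul' _ _ ENNReal.ofReal_ne_top]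
      refine lintegral_mono_ae ?_
      filter_upwards [ae_pos_rho] with y hy
      rw [enorm_mul, mul_comm]
      gcongr
      rw [Real.enorm_eq_ofReal_abs]
      exact ENNReal.ofReal_le_ofReal (hC y hy)
    · refine (ENNReal.ofReal_le_ofReal (Finset.abs_sum_le_sum_abs _ _)).trans ?_
      rw [ENNReal.ofReal_sum_of_nonneg fun j _ => abs_nonneg _]
      refine le_trans ?_ (ENNReal.sum_le_tsum (Finset.range N))
      refine Finset.sum_le_sum fun j _ => ?_
      rw [abs_mul, ENNReal.ofReal_mul (abs_nonneg _)]
      gcongr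
      refine le_trans ?_ (hF j)
      unfold maxPoisson
      exact le_iSup₂ (f := fun (t : ℝ) (_ : 0 < t) => ENNReal.ofReal |convPoisson (A j) t x|) t ht
  have hl : Tendsto (fun N : ℕ => ENNReal.ofReal C * eLpNorm (fun x => f x - ∑ j ∈ Finset.range N, lam j * A j x) 1 ρG + S)
      atTop (nhds (ENNReal.ofReal C * 0 + S)) :=
    (ENNReal.Tendsto.const_mul hlim (Or.inr ENNReal.ofReal_ne_top)).add tendsto_const_nhds
  rw [mul_zero, zero_add] at hl
  exact ge_of_tendsto' hl key

theorem poisson_maximal_H1_to_L1 :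
    ∃ C > (0 : ℝ), ∀ f : G → ℝ, MemH1 f →
      ∫⁻ x, maxPoisson f x ∂ρG ≤ ENNReal.ofReal (C * H1norm f) := by
  obtain ⟨C, hC, hall⟩ := atom_maj
  refine ⟨C, hC, fun f hf => ?_⟩
  obtain ⟨hfi, lam0, A0, hd0⟩ := hf
  have key : ∀ s ∈ {s | ∃ lam A, IsH1Decomp f lam A ∧ s = ∑' j, |lam j|},
      ∫⁻ x, maxPoisson f x ∂ρG ≤ ENNReal.ofReal (C * s) := by
    rintro s ⟨lam, A, hd, rfl⟩
    choose F hFm hFle hFint using fun j => hall (A j) (hd.1 j)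
    calc ∫⁻ x, maxPoisson f x ∂ρG ≤ ∫⁻ x, ∑' j, ENNReal.ofReal |lam j| * F j x ∂ρG := by
          refine lintegral_mono_ae ?_
          filter_upwards [ae_pos_rho] with x hx
          exact conv_le_tsum hfi hd hx fun j => hFle j x hx
      _ = ∑' j, ENNReal.ofReal |lam j| * ∫⁻ x, F j x ∂ρG := by
          rw [lintegral_tsum fun j => ((hFm j).const_mul _).aemeasurable]
          simp_rw [lintegral_const_mul' _ _ ENNReal.ofReal_ne_top]
      _ ≤ ∑' j, ENNReal.ofReal |lam j| * ENNReal.ofReal C := by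
          gcongr with j; exact hFint j
      _ = ENNReal.ofReal (C * ∑' j, |lam j|) := by
          rw [ENNReal.tsum_mul_right, ← ENNReal.ofReal_tsum_of_nonneg (fun j => abs_nonneg _) hd.2.1,
            mul_comm C, ENNReal.ofReal_mul (tsum_nonneg fun j => abs_nonneg _)]
  have hne : {s | ∃ lam A, IsH1Decomp f lam A ∧ s = ∑' j, |lam j|}.Nonempty := ⟨_, lam0, A0, hd0, rfl⟩
  have hfin : ∫⁻ x, maxPoisson f x ∂ρG ≠ ⊤ :=
    ne_top_of_le_ne_top ENNReal.ofReal_ne_top (key _ ⟨lam0, A0, hd0, rfl⟩)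
  have hle : (∫⁻ x, maxPoisson f x ∂ρG).toReal / C ≤ H1norm f := by
    refine le_csInf hne fun s hs => ?_
    have hs0 : 0 ≤ s := by
      obtain ⟨lam, A, -, rfl⟩ := hs
      exact tsum_nonneg fun j => abs_nonneg _
    rw [div_le_iff₀ hC, mul_comm]
    exact ENNReal.toReal_le_of_le_ofReal (by positivity) (key s hs)
  rw [← ENNReal.ofReal_toReal hfin]
  apply ENNReal.ofReal_le_ofReal
  rw [div_le_iff₀ hC] at hle
  linarith
end
end

section
/- For every t > 0, every x = (x₁,x₂,a) ∈ G with x ≠ e, and i = 1,2, the derivative of the heat kernel along X_i satisfies X_i p_t(x) = p_t(x) · (x_i/sinh r) · (1/r − cosh r/sinh r − r/(2t)), where r = r(x). -/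
open MeasureTheory Real Filter Set
open scoped ENNReal

noncomputable section

theorem coshArg_gt_one (x : G) (ha : 0 < x.2.2) (hx : x ≠ gE) : 1 < coshArg x := by
  obtain ⟨x1, x2, a⟩ := x
  simp only at ha
  have h : coshArg (x1, x2, a) - 1 = ((a - 1) ^ 2 + (x1 ^ 2 + x2 ^ 2)) / (2 * a) := by
    simp only [coshArg]
    field_simp
    ring
  have hpos : 0 < (a - 1) ^ 2 + (x1 ^ 2 + x2 ^ 2) := by
    by_contra hcon
    have h1 : x1 = 0 := by nlinarith [sq_nonneg (a - 1), sq_nonneg x1, sq_nonneg x2]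
    have h2 : x2 = 0 := by nlinarith [sq_nonneg (a - 1), sq_nonneg x1, sq_nonneg x2]
    have h3 : a - 1 = 0 := by nlinarith [sq_nonneg (a - 1), sq_nonneg x1, sq_nonneg x2]
    apply hx
    have h4 : a = 1 := by linarith
    simp [gE, h1, h2, h4]
  have : 0 < coshArg (x1, x2, a) - 1 := by rw [h]; positivity
  linarith

theorem rG_eq_arcosh (x : G) : rG x = Real.arcosh (coshArg x) := rfl

theorem heat_curve (t : ℝ) (ht : 0 < t) (a : ℝ) (ha : 0 < a) (g : ℝ → G) (s y : ℝ)
    (hg : ∀ u, (g u).2.2 = a) (hc : HasDerivAt (fun u => coshArg (g u)) (y / a) s)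
    (h1 : 1 < coshArg (g s)) :
    a * deriv (fun u => heatK t (g u)) s = heatK t (g s) * (y / Real.sinh (rG (g s))) *
        ((rG (g s))⁻¹ - Real.cosh (rG (g s)) / Real.sinh (rG (g s)) - rG (g s) / (2 * t)) := by
  have hr0 : 0 < rG (g s) := by
    rw [rG_eq_arcosh]; exact Real.arcosh_pos h1
  have hsinh : 0 < Real.sinh (rG (g s)) := Real.sinh_pos_iff.2 hr0
  have hr : HasDerivAt (fun u => rG (g u)) (y / a / Real.sinh (rG (g s))) s := by
    have h := (Real.hasDerivAt_arcosh h1).comp s hc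
    have h2 : Real.sinh (rG (g s)) = Real.sqrt (coshArg (g s) ^ 2 - 1) := by
      rw [rG_eq_arcosh, Real.sinh_arcosh h1.le]
    rw [h2]
    refine h.congr_deriv ?_
    rw [div_eq_inv_mul _ (Real.sqrt _)]
  have hne : ∀ᶠ u in nhds s, rG (g u) ≠ 0 := hr.continuousAt.eventually_ne hr0.ne'
  have hs : ∀ u, deltaG (g u) = (a ^ 2)⁻¹ := fun u => by simp [deltaG, hg]
  have hd := (((hr.div hr.sinh hsinh.ne').const_mul
      ((8 * Real.pi ^ ((3 : ℝ)/2))⁻¹ * Real.sqrt ((a ^ 2)⁻¹))).mul_const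
      (t ^ (-(3 : ℝ)/2))).mul (((hr.pow 2).neg.div_const (4 * t)).exp)
  have hd2 := hd.congr_of_eventuallyEq (f₁ := fun u => heatK t (g u)) (by
    filter_upwards [hne] with u hu
    show heatK t (g u) = (8 * Real.pi ^ ((3 : ℝ)/2))⁻¹ * Real.sqrt ((a ^ 2)⁻¹) *
      (rG (g u) / Real.sinh (rG (g u))) * t ^ (-(3 : ℝ)/2) * Real.exp (-(rG (g u) ^ 2) / (4 * t))
    simp only [heatK, hs, if_neg hu])
  rw [hd2.deriv]
  simp only [heatK, hs, if_neg hr0.ne', Pi.div_apply, Pi.neg_apply, Pi.pow_apply]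
  generalize Real.sqrt ((a ^ 2)⁻¹) = q
  generalize Real.pi ^ ((3 : ℝ)/2) = p
  generalize t ^ (-(3 : ℝ)/2) = w
  generalize Real.exp (-(rG (g s) ^ 2) / (4 * t)) = e
  generalize Real.cosh (rG (g s)) = C
  generalize Real.sinh (rG (g s)) = S at *
  generalize rG (g s) = r at *
  rw [mul_inv]
  generalize p⁻¹ = p'
  field_simp
  ring

theorem X1_X2_heatK (t : ℝ) (ht : 0 < t) (x : G) (ha : 0 < x.2.2) (hx : x ≠ gE) :
    X1 (heatK t) x = heatK t x * (x.1 / Real.sinh (rG x)) *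
        ((rG x)⁻¹ - Real.cosh (rG x) / Real.sinh (rG x) - rG x / (2 * t)) ∧
    X2 (heatK t) x = heatK t x * (x.2.1 / Real.sinh (rG x)) *
        ((rG x)⁻¹ - Real.cosh (rG x) / Real.sinh (rG x) - rG x / (2 * t)) := by
  have h1 := coshArg_gt_one x ha hx
  constructor
  · refine heat_curve t ht x.2.2 ha (fun s => (s, x.2.1, x.2.2)) x.1 x.1 (fun _ => rfl) ?_ h1
    have h := ((((hasDerivAt_id x.1).pow 2).add_const (x.2.1 ^ 2)).const_mul
      (x.2.2⁻¹)).const_add (x.2.2 + x.2.2⁻¹) |>.div_const 2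
    refine h.congr_deriv ?_
    simp
    field_simp
  · refine heat_curve t ht x.2.2 ha (fun s => (x.1, s, x.2.2)) x.2.1 x.2.1 (fun _ => rfl) ?_ h1
    have h := ((((hasDerivAt_id x.2.1).pow 2).const_add (x.1 ^ 2)).const_mul
      (x.2.2⁻¹)).const_add (x.2.2 + x.2.2⁻¹) |>.div_const 2
    refine h.congr_deriv ?_
    simp
    field_simp
end
end

section
/- There exists a constant C > 0 such that for i = 0,1,2 and every x ∈ G with 0 < r(x) < 1, one has sup_{t>0} |X_i p_t(x)| ≤ C r(x)⁻⁴. -/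
open MeasureTheory Real Filter Set
open scoped ENNReal

noncomputable section

lemma aux_sinh_le_mul_cosh (r : ℝ) (hr : 0 ≤ r) : Real.sinh r ≤ r * Real.cosh r := by
  have hd : ∀ y : ℝ, HasDerivAt (fun y => y * Real.cosh y - Real.sinh y) (y * Real.sinh y) y := by
    intro y
    have h := ((hasDerivAt_id y).mul (Real.hasDerivAt_cosh y)).sub (Real.hasDerivAt_sinh y)
    refine HasDerivAt.congr_deriv h ?_
    simp
  have hm : MonotoneOn (fun y : ℝ => y * Real.cosh y - Real.sinh y) (Set.Ici 0) := by
    refine monotoneOn_of_deriv_nonneg (convex_Ici 0)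
      (fun y _ => (hd y).continuousAt.continuousWithinAt)
      (fun y _ => (hd y).differentiableAt.differentiableWithinAt) ?_
    intro y hy
    rw [interior_Ici] at hy
    have hy0 : 0 < y := hy
    rw [(hd y).deriv]
    exact mul_nonneg hy0.le (Real.sinh_nonneg_iff.2 hy0.le)
  have := hm (Set.mem_Ici.2 le_rfl) (Set.mem_Ici.2 hr) hr
  simp at this
  linarith

lemma aux_pow (r s : ℝ) (hr : 0 < r) (hs : 0 < s) (k : ℕ) (hk : k ≤ 6) :
    s ^ k * Real.exp (-(r ^ 2 * s ^ 2 / 4)) ≤ 385 / r ^ k := by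
  have hw : 0 ≤ r ^ 2 * s ^ 2 / 4 := by positivity
  have h3 := Real.pow_div_factorial_le_exp _ hw 3
  have h1 : 1 ≤ Real.exp (r ^ 2 * s ^ 2 / 4) := Real.one_le_exp hw
  have hv : 0 ≤ r * s := by positivity
  have h6 : (r * s) ^ k ≤ 1 + (r * s) ^ 6 := by
    rcases le_total (r * s) 1 with h | h
    · have := pow_le_one₀ (n := k) hv h
      have : 0 ≤ (r * s) ^ 6 := by positivity
      linarith
    · have := pow_le_pow_right₀ h hk
      linarith
  have h7 : (r * s) ^ k ≤ 385 * Real.exp (r ^ 2 * s ^ 2 / 4) := by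
    norm_num [Nat.factorial] at h3
    have : (r * s) ^ 6 = 64 * (r ^ 2 * s ^ 2 / 4) ^ 3 := by ring
    linarith
  rw [Real.exp_neg, ← div_eq_mul_inv, div_le_div_iff₀ (Real.exp_pos _) (by positivity)]
  calc s ^ k * r ^ k = (r * s) ^ k := by ring
    _ ≤ _ := h7

lemma aux_bound (t r B A D : ℝ) (ht : 0 < t) (hr : 0 < r) (hr1 : r < 1)
    (hB : |B| ≤ 4) (hA : |A| ≤ 4) (hD : |D| ≤ 1) :
    |(8 * Real.pi ^ ((3 : ℝ)/2))⁻¹ * t ^ (-(3 : ℝ)/2) * Real.exp (-(r ^ 2) / (4 * t)) *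
      (A * (r / Real.sinh r) + B * D * ((Real.sinh r - r * Real.cosh r) / Real.sinh r ^ 2
        - r / (2 * t) * (r / Real.sinh r)))| ≤ 4000 / r ^ 4 := by
  have hsr : r ≤ Real.sinh r := Real.self_le_sinh_iff.2 hr.le
  have hs0 : 0 < Real.sinh r := by linarith
  have hφ0 : 0 ≤ r / Real.sinh r := by positivity
  have hφ : r / Real.sinh r ≤ 1 := (div_le_one hs0).2 hsr
  have hc1 : 1 ≤ Real.cosh r := Real.one_le_cosh r
  have hc2 : Real.cosh r ^ 2 = Real.sinh r ^ 2 + 1 := Real.cosh_sq r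
  have hψ : |(Real.sinh r - r * Real.cosh r) / Real.sinh r ^ 2| ≤ 1 := by
    rw [abs_div, abs_of_pos (by positivity : 0 < Real.sinh r ^ 2), div_le_one (by positivity)]
    rw [abs_le]
    have h1 : r * (Real.cosh r - 1) ≤ Real.sinh r ^ 2 := by nlinarith
    have h2 : Real.sinh r ≤ r * Real.cosh r := aux_sinh_le_mul_cosh r hr.le
    constructor
    · nlinarith
    · nlinarith
  set s : ℝ := t ^ (-(1/2 : ℝ)) with hs
  have hspos : 0 < s := Real.rpow_pos_of_pos ht _
  have hs3 : t ^ (-(3 : ℝ)/2) = s ^ 3 := by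
    rw [hs, ← Real.rpow_natCast, ← Real.rpow_mul ht.le]; norm_num
  have hs2 : t⁻¹ = s ^ 2 := by
    rw [hs, ← Real.rpow_natCast, ← Real.rpow_mul ht.le]; norm_num [Real.rpow_neg_one]
  have he : -(r ^ 2) / (4 * t) = -(r ^ 2 * s ^ 2 / 4) := by rw [← hs2]; field_simp
  have he2 : r / (2 * t) = r * s ^ 2 / 2 := by rw [← hs2]; field_simp
  rw [hs3, he, he2]
  have b3 := aux_pow r s hr hspos 3 (by norm_num)
  have b5 := aux_pow r s hr hspos 5 (by norm_num)
  set E := Real.exp (-(r ^ 2 * s ^ 2 / 4)) with hE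
  have hE0 : 0 < E := Real.exp_pos _
  have hK : |(8 * Real.pi ^ ((3 : ℝ)/2))⁻¹| ≤ 1 := by
    have h1 : 1 ≤ Real.pi ^ ((3 : ℝ)/2) :=
      Real.one_le_rpow (by linarith [Real.pi_gt_three]) (by norm_num)
    rw [abs_of_pos (by positivity)]
    exact inv_le_one_of_one_le₀ (by linarith)
  set φ := r / Real.sinh r
  set ψ := (Real.sinh r - r * Real.cosh r) / Real.sinh r ^ 2
  have hin : |A * φ + B * D * (ψ - r * s ^ 2 / 2 * φ)| ≤ 8 + 2 * (r * s ^ 2) := by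
    have h1 : |A * φ| ≤ 4 := by
      rw [abs_mul, abs_of_nonneg hφ0]; nlinarith [abs_nonneg A]
    have h2 : |B * D| ≤ 4 := by
      rw [abs_mul]; nlinarith [abs_nonneg B, abs_nonneg D]
    have h3 : |ψ - r * s ^ 2 / 2 * φ| ≤ 1 + r * s ^ 2 / 2 := by
      have hq : 0 ≤ r * s ^ 2 / 2 := by positivity
      have : |r * s ^ 2 / 2 * φ| ≤ r * s ^ 2 / 2 := by
        rw [abs_of_nonneg (by positivity)]; nlinarith
      exact (abs_sub _ _).trans (add_le_add hψ this)
    have h4 : |B * D * (ψ - r * s ^ 2 / 2 * φ)| ≤ 4 * (1 + r * s ^ 2 / 2) := by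
      rw [abs_mul]; exact mul_le_mul h2 h3 (abs_nonneg _) (by norm_num)
    have h5 := abs_add_le (A * φ) (B * D * (ψ - r * s ^ 2 / 2 * φ))
    linarith
  rw [abs_mul, abs_mul, abs_mul, abs_of_pos hE0, abs_of_pos (pow_pos hspos 3)]
  have hse : 0 ≤ s ^ 3 * E := by positivity
  calc _ ≤ 1 * s ^ 3 * E * (8 + 2 * (r * s ^ 2)) := by gcongr
    _ = 8 * (s ^ 3 * E) + 2 * r * (s ^ 5 * E) := by ring
    _ ≤ 8 * (385 / r ^ 3) + 2 * r * (385 / r ^ 5) := by gcongr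
    _ = (3080 * r + 770) / r ^ 4 := by field_simp; ring
    _ ≤ 4000 / r ^ 4 := by gcongr; linarith

lemma aux_deriv (t : ℝ) (g : ℝ → G) (s0 A D : ℝ) (hc : 1 < coshArg (g s0))
    (hD : HasDerivAt (fun s => coshArg (g s)) D s0)
    (hA : HasDerivAt (fun s => Real.sqrt (deltaG (g s))) A s0) (ht : 0 < t) :
    HasDerivAt (fun s => heatK t (g s))
      ((8 * Real.pi ^ ((3 : ℝ)/2))⁻¹ * t ^ (-(3 : ℝ)/2) *
        Real.exp (-(rG (g s0) ^ 2) / (4 * t)) *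
      (A * (rG (g s0) / Real.sinh (rG (g s0))) +
        Real.sqrt (deltaG (g s0)) * (D / Real.sinh (rG (g s0))) *
        ((Real.sinh (rG (g s0)) - rG (g s0) * Real.cosh (rG (g s0))) / Real.sinh (rG (g s0)) ^ 2
        - rG (g s0) / (2 * t) * (rG (g s0) / Real.sinh (rG (g s0)))))) s0 := by
  have hr : HasDerivAt (fun s => rG (g s)) (D / Real.sinh (rG (g s0))) s0 := by
    have h1 := (Real.hasDerivAt_arcosh (x := coshArg (g s0)) hc).comp s0 hD
    have h2 : Real.sinh (rG (g s0)) = √(coshArg (g s0) ^ 2 - 1) := Real.sinh_arcosh hc.le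
    rw [h2, div_eq_inv_mul]
    exact h1
  have hpos : 0 < rG (g s0) := Real.arcosh_pos hc
  have hne : ∀ᶠ s in nhds s0, rG (g s) ≠ 0 := hr.continuousAt.eventually_ne hpos.ne'
  have hs0 : Real.sinh (rG (g s0)) ≠ 0 := (Real.sinh_pos_iff.2 hpos).ne'
  have hφ := hr.div hr.sinh hs0
  have hexp := (((hr.pow 2).neg).div_const (4 * t)).exp
  have hfull := (((hA.const_mul ((8 * Real.pi ^ ((3 : ℝ)/2))⁻¹)).mul hφ).mul_const
    (t ^ (-(3 : ℝ)/2))).mul hexp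
  have heq : (fun s => heatK t (g s)) =ᶠ[nhds s0] (fun s =>
      (8 * Real.pi ^ ((3 : ℝ)/2))⁻¹ * Real.sqrt (deltaG (g s)) *
      (rG (g s) / Real.sinh (rG (g s))) * t ^ (-(3 : ℝ)/2) *
      Real.exp (-(rG (g s) ^ 2) / (4 * t))) := by
    filter_upwards [hne] with s hs
    unfold heatK; rw [if_neg hs]
  refine HasDerivAt.congr_of_eventuallyEq ?_ heq
  refine HasDerivAt.congr_deriv hfull ?_
  simp only [Pi.div_apply, Pi.mul_apply, Pi.neg_apply, Pi.pow_apply]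
  field_simp
  ring

lemma aux_final (t : ℝ) (g : ℝ → G) (s0 A D a : ℝ) (hc : 1 < coshArg (g s0))
    (hD : HasDerivAt (fun s => coshArg (g s)) D s0)
    (hA : HasDerivAt (fun s => Real.sqrt (deltaG (g s))) A s0) (ht : 0 < t)
    (hr1 : rG (g s0) < 1) (hB : |Real.sqrt (deltaG (g s0))| ≤ 4) (haA : |a * A| ≤ 4)
    (haD : (a * D) ^ 2 ≤ coshArg (g s0) ^ 2 - 1) :
    |a * deriv (fun s => heatK t (g s)) s0| ≤ 4000 / rG (g s0) ^ 4 := by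
  have hpos : 0 < rG (g s0) := Real.arcosh_pos hc
  have hs : 0 < Real.sinh (rG (g s0)) := Real.sinh_pos_iff.2 hpos
  have h2 : Real.sinh (rG (g s0)) = √(coshArg (g s0) ^ 2 - 1) := Real.sinh_arcosh hc.le
  rw [(aux_deriv t g s0 A D hc hD hA ht).deriv]
  have hD1 : |a * D / Real.sinh (rG (g s0))| ≤ 1 := by
    rw [abs_div, abs_of_pos hs, div_le_one hs, h2]
    exact Real.abs_le_sqrt haD
  have := aux_bound t (rG (g s0)) _ _ _ ht hpos hr1 hB haA hD1
  convert this using 2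
  ring

lemma aux_sqrt_delta (x : G) (hx : 0 < x.2.2) : Real.sqrt (deltaG x) = x.2.2⁻¹ := by
  unfold deltaG
  rw [← inv_pow, Real.sqrt_sq (inv_pos.2 hx).le]

theorem sup_Xi_heatK_small :
    ∃ C > (0 : ℝ), ∀ x : G, 0 < x.2.2 → 0 < rG x → rG x < 1 → ∀ t > (0 : ℝ),
      |X0 (heatK t) x| ≤ C / rG x ^ 4 ∧
      |X1 (heatK t) x| ≤ C / rG x ^ 4 ∧
      |X2 (heatK t) x| ≤ C / rG x ^ 4 := by
  refine ⟨4000, by norm_num, ?_⟩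
  rintro ⟨x1, x2, a⟩ ha hr hr1 t ht
  simp only at ha
  have hc0 : 1 ≤ coshArg (x1, x2, a) := by
    unfold coshArg
    simp only
    have h1 : 0 < a⁻¹ := inv_pos.2 ha
    have h2 : a * a⁻¹ = 1 := mul_inv_cancel₀ ha.ne'
    have : 0 ≤ a⁻¹ * (x1 ^ 2 + x2 ^ 2) := by positivity
    nlinarith [sq_nonneg (a - a⁻¹)]
  have hc : 1 < coshArg (x1, x2, a) := by
    rcases hc0.lt_or_eq with h | h
    · exact h
    · have : rG (x1, x2, a) = 0 := (Real.arcosh_eq_zero_iff hc0).2 h.symm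
      linarith
  have hc2 : coshArg (x1, x2, a) < 2 := by
    have h : Real.cosh (rG (x1, x2, a)) = coshArg (x1, x2, a) := Real.cosh_arcosh hc0
    rw [← h, Real.cosh_eq]
    have h1 := Real.exp_lt_exp.2 hr1
    have h2 : Real.exp (-rG (x1, x2, a)) < 1 := by simpa using hr
    linarith [Real.exp_one_lt_d9]
  have hinv : 0 < a⁻¹ := inv_pos.2 ha
  have hmul : a * a⁻¹ = 1 := mul_inv_cancel₀ ha.ne'
  have ha4 : a⁻¹ ≤ 4 := by
    unfold coshArg at hc2
    simp only at hc2
    have : 0 ≤ a⁻¹ * (x1 ^ 2 + x2 ^ 2) := by positivity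
    linarith
  have hB : |Real.sqrt (deltaG (x1, x2, a))| ≤ 4 := by
    rw [aux_sqrt_delta _ ha, abs_of_pos hinv]; exact ha4
  have hcs : x1 ^ 2 + x2 ^ 2 ≤ coshArg (x1, x2, a) ^ 2 - 1 := by
    unfold coshArg
    simp only
    have key : a * (a⁻¹ * (1 + (x1 ^ 2 + x2 ^ 2))) = 1 + (x1 ^ 2 + x2 ^ 2) := by
      rw [← mul_assoc, hmul, one_mul]
    nlinarith [sq_nonneg (a - a⁻¹ * (1 + (x1 ^ 2 + x2 ^ 2)))]
  refine ⟨?_, ?_, ?_⟩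
  · have hD : HasDerivAt (fun s : ℝ => coshArg (x1, x2, s))
        ((1 + -(a ^ 2)⁻¹ + -(a ^ 2)⁻¹ * (x1 ^ 2 + x2 ^ 2)) / 2) a := by
      have hi := hasDerivAt_inv ha.ne'
      exact (((hasDerivAt_id a).add hi).add (hi.mul_const (x1 ^ 2 + x2 ^ 2))).div_const 2
    have hA : HasDerivAt (fun s : ℝ => Real.sqrt (deltaG (x1, x2, s))) (-(a ^ 2)⁻¹) a := by
      refine (hasDerivAt_inv ha.ne').congr_of_eventuallyEq ?_
      filter_upwards [lt_mem_nhds ha] with s hs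
      exact aux_sqrt_delta (x1, x2, s) hs
    refine aux_final t (fun s => (x1, x2, s)) a _ _ a hc hD hA ht hr1 hB ?_ ?_
    · have : a * -(a ^ 2)⁻¹ = -a⁻¹ := by field_simp
      rw [this, abs_neg, abs_of_pos hinv]; exact ha4
    · unfold coshArg
      simp only
      have : a * ((1 + -(a ^ 2)⁻¹ + -(a ^ 2)⁻¹ * (x1 ^ 2 + x2 ^ 2)) / 2)
        = (a - a⁻¹ * (1 + (x1 ^ 2 + x2 ^ 2))) / 2 := by field_simp; ring
      rw [this]
      have key : a * (a⁻¹ * (1 + (x1 ^ 2 + x2 ^ 2))) = 1 + (x1 ^ 2 + x2 ^ 2) := by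
        rw [← mul_assoc, hmul, one_mul]
      nlinarith [sq_nonneg x1, sq_nonneg x2]
  · have hD : HasDerivAt (fun s : ℝ => coshArg (s, x2, a)) (a⁻¹ * x1) x1 := by
      have h := (((((hasDerivAt_id x1).pow 2).add_const (x2 ^ 2)).const_mul a⁻¹).const_add
        (a + a⁻¹)).div_const 2
      refine HasDerivAt.congr_deriv h ?_
      simp; ring
    have hA : HasDerivAt (fun s : ℝ => Real.sqrt (deltaG (s, x2, a))) 0 x1 :=
      hasDerivAt_const x1 (Real.sqrt (a ^ 2)⁻¹)
    refine aux_final t (fun s => (s, x2, a)) x1 _ _ a hc hD hA ht hr1 hB (by simp) ?_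
    rw [← mul_assoc, hmul, one_mul]
    exact le_trans (by nlinarith [sq_nonneg x2]) hcs
  · have hD : HasDerivAt (fun s : ℝ => coshArg (x1, s, a)) (a⁻¹ * x2) x2 := by
      have h := (((((hasDerivAt_id x2).pow 2).const_add (x1 ^ 2)).const_mul a⁻¹).const_add
        (a + a⁻¹)).div_const 2
      refine HasDerivAt.congr_deriv h ?_
      simp; ring
    have hA : HasDerivAt (fun s : ℝ => Real.sqrt (deltaG (x1, s, a))) 0 x2 :=
      hasDerivAt_const x2 (Real.sqrt (a ^ 2)⁻¹)
    refine aux_final t (fun s => (x1, s, a)) x2 _ _ a hc hD hA ht hr1 hB (by simp) ?_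
    rw [← mul_assoc, hmul, one_mul]
    exact le_trans (by nlinarith [sq_nonneg x1]) hcs
end
end
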